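/- For every bounded potential V : ℤ → ℝ and every ε > 0, there exists a limit-periodic potential V_lp : ℤ → ℝ with ‖V_lp‖_∞ < ε such that the discrete Schrödinger operator on ℓ²(ℤ) with potential V + V_lp has pure point spectrum. -/

import Mathlib

open MeasureTheory

noncomputable section

/-- `ψ ∈ ℓ²(ℤ)` is an eigenfunction of the discrete Schrödinger operator with potential `V`
corresponding to the eigenvalue `E`: `ψ ≠ 0` and `ψ(n+1) + ψ(n-1) + V(n)ψ(n) = Eψ(n)`. -/
def IsEigenfunction (V : ℤ → ℝ) (E : ℝ) (ψ : lp (fun _ : ℤ => ℝ) 2) : Prop :=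
  ψ ≠ 0 ∧ ∀ n : ℤ, (ψ : ∀ _ : ℤ, ℝ) (n + 1) + (ψ : ∀ _ : ℤ, ℝ) (n - 1)
    + V n * (ψ : ∀ _ : ℤ, ℝ) n = E * (ψ : ∀ _ : ℤ, ℝ) n

/-- The discrete Schrödinger operator with potential `V` has pure point spectrum:
its eigenfunctions span a dense subspace of `ℓ²(ℤ)`. -/
def HasPurePointSpectrum (V : ℤ → ℝ) : Prop :=
  (Submodule.span ℝ
    {ψ : lp (fun _ : ℤ => ℝ) 2 | ∃ E : ℝ, IsEigenfunction V E ψ}).topologicalClosure = ⊤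

/-- A potential is periodic if it is invariant under translation by some positive period. -/
def IsPeriodicPotential (W : ℤ → ℝ) : Prop :=
  ∃ p : ℕ, 0 < p ∧ ∀ n : ℤ, W (n + p) = W n

/-- A potential is limit-periodic if it is a uniform limit of periodic potentials. -/
def IsLimitPeriodic (V : ℤ → ℝ) : Prop :=
  ∀ ε > (0:ℝ), ∃ W : ℤ → ℝ, IsPeriodicPotential W ∧ ∀ n : ℤ, |V n - W n| ≤ ε

open scoped ENNReal

/-- The lattice interval `[-N, N]`. -/
abbrev latticeBox (N : ℕ) : Finset ℤ := Finset.Icc (-(N : ℤ)) N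

/-- `φ` is a normalized eigenvector, with eigenvalue `E`, of the Schrödinger operator with
potential `U` restricted to `[-N, N]` with Dirichlet boundary conditions, extended by zero. -/
structure IsBoxEigenvector (U : ℤ → ℝ) (N : ℕ) (E : ℝ) (φ : ℤ → ℝ) : Prop where
  zero : ∀ n ∉ latticeBox N, φ n = 0
  eqn : ∀ n ∈ latticeBox N, φ (n + 1) + φ (n - 1) + U n * φ n = E * φ n
  norm : ∑ n ∈ latticeBox N, φ n ^ 2 = 1

lemma card_latticeBox (N : ℕ) : (latticeBox N).card = 2 * N + 1 := by
  simp [latticeBox]; omega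

lemma latticeBox_mono {N N' : ℕ} (h : N ≤ N') : latticeBox N ⊆ latticeBox N' := by
  intro n; simp only [Finset.mem_Icc]; omega

/-- The Wronskian of two sequences. -/
def wronskian (f g : ℤ → ℝ) (n : ℤ) : ℝ := f (n + 1) * g n - f n * g (n + 1)

lemma sum_Icc_sub_sub_one (W : ℤ → ℝ) (a b : ℤ) (h : a ≤ b + 1) :
    ∑ n ∈ Finset.Icc a b, (W n - W (n - 1)) = W b - W (a - 1) := by
  obtain ⟨k, hk⟩ : ∃ k : ℕ, b = a - 1 + k := ⟨(b + 1 - a).toNat, by omega⟩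
  subst hk
  clear h
  induction k with
  | zero => simp
  | succ k ih =>
    have : Finset.Icc a (a - 1 + ((k + 1 : ℕ) : ℤ))
        = insert (a + k) (Finset.Icc a (a - 1 + (k : ℤ))) := by
      ext n; simp only [Finset.mem_insert, Finset.mem_Icc]; push_cast; omega
    rw [this, Finset.sum_insert (by simp), ih]
    have h1 : a - 1 + ((k + 1 : ℕ) : ℤ) = a + k := by push_cast; ring
    have h2 : a + (k : ℤ) - 1 = a - 1 + k := by ring
    rw [h1, h2]; ring

lemma wronskian_sub (f g : ℤ → ℝ) (n : ℤ) :
    wronskian f g n - wronskian f g (n - 1)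
      = (f (n + 1) + f (n - 1)) * g n - f n * (g (n + 1) + g (n - 1)) := by
  simp only [wronskian, sub_add_cancel]; ring

/-- Green's identity for a box eigenvector against an arbitrary solution. -/
lemma IsBoxEigenvector.overlap {U U' : ℤ → ℝ} {N : ℕ} {e E : ℝ} {ψ φ : ℤ → ℝ}
    (hψ : IsBoxEigenvector U N e ψ)
    (hφ : ∀ n ∈ latticeBox N, φ (n + 1) + φ (n - 1) + U' n * φ n = E * φ n) :
    (E - e) * ∑ n ∈ latticeBox N, ψ n * φ n
      = ψ N * φ (N + 1) + ψ (-N) * φ (-N - 1)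
        + ∑ n ∈ latticeBox N, (U' n - U n) * (ψ n * φ n) := by
  have h := sum_Icc_sub_sub_one (wronskian φ ψ) (-(N : ℤ)) N (by omega)
  have h1 : ∀ n ∈ latticeBox N, wronskian φ ψ n - wronskian φ ψ (n - 1)
      = (E - e) * (ψ n * φ n) - (U' n - U n) * (ψ n * φ n) := by
    intro n hn
    rw [wronskian_sub]
    linear_combination ψ n * hφ n hn - φ n * hψ.eqn n hn
  rw [Finset.sum_congr rfl h1, Finset.sum_sub_distrib, ← Finset.mul_sum] at h
  have z1 : ψ ((N : ℤ) + 1) = 0 := hψ.zero _ (by simp)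
  have z2 : ψ (-(N : ℤ) - 1) = 0 := hψ.zero _ (by simp)
  simp only [wronskian, sub_add_cancel, z1, z2] at h
  linarith

lemma IsBoxEigenvector.congr {U U' : ℤ → ℝ} {N : ℕ} {e : ℝ} {ψ : ℤ → ℝ}
    (hψ : IsBoxEigenvector U N e ψ) (h : ∀ n ∈ latticeBox N, U' n = U n) :
    IsBoxEigenvector U' N e ψ :=
  ⟨hψ.zero, fun n hn => by rw [h n hn]; exact hψ.eqn n hn, hψ.norm⟩

lemma IsBoxEigenvector.neg {U : ℤ → ℝ} {N : ℕ} {e : ℝ} {ψ : ℤ → ℝ}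
    (hψ : IsBoxEigenvector U N e ψ) : IsBoxEigenvector U N e (-ψ) :=
  ⟨fun n hn => by simp [hψ.zero n hn],
    fun n hn => by simp only [Pi.neg_apply]; linear_combination - hψ.eqn n hn,
    by simpa using hψ.norm⟩

lemma IsBoxEigenvector.sq_le_one {U : ℤ → ℝ} {N : ℕ} {e : ℝ} {ψ : ℤ → ℝ}
    (hψ : IsBoxEigenvector U N e ψ) (n : ℤ) : ψ n ^ 2 ≤ 1 := by
  by_cases hn : n ∈ latticeBox N
  · rw [← hψ.norm]
    exact Finset.single_le_sum (f := fun n => ψ n ^ 2) (fun _ _ => sq_nonneg _) hn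
  · simp [hψ.zero n hn]

lemma IsBoxEigenvector.abs_le_one {U : ℤ → ℝ} {N : ℕ} {e : ℝ} {ψ : ℤ → ℝ}
    (hψ : IsBoxEigenvector U N e ψ) (n : ℤ) : |ψ n| ≤ 1 :=
  (sq_le_one_iff_abs_le_one _).1 (hψ.sq_le_one n)

lemma IsBoxEigenvector.abs_energy_le {U : ℤ → ℝ} {N : ℕ} {e M : ℝ} {ψ : ℤ → ℝ}
    (hψ : IsBoxEigenvector U N e ψ) (hU : ∀ n, |U n| ≤ M) : |e| ≤ M + 2 := by
  obtain ⟨q, hq, hmax⟩ := Finset.exists_max_image (latticeBox N) (fun n => |ψ n|) ⟨0, by simp⟩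
  have hall : ∀ n, |ψ n| ≤ |ψ q| := fun n => by
    by_cases hn : n ∈ latticeBox N
    · exact hmax n hn
    · rw [hψ.zero n hn]; simp
  have hpos : 0 < |ψ q| := by
    rcases (abs_nonneg (ψ q)).lt_or_eq with h | h
    · exact h
    · have : ∑ n ∈ latticeBox N, ψ n ^ 2 = 0 := Finset.sum_eq_zero fun n _ => by
        have h1 := hall n
        rw [← h] at h1
        have : ψ n = 0 := abs_nonpos_iff.1 h1
        simp [this]
      rw [hψ.norm] at this; norm_num at this
  have h1 := hψ.eqn q hq
  have h2 : |e| * |ψ q| ≤ (M + 2) * |ψ q| := by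
    rw [← abs_mul, ← h1]
    calc _ ≤ |ψ (q + 1)| + |ψ (q - 1)| + |U q| * |ψ q| := by
          rw [← abs_mul]; exact abs_add_three _ _ _
      _ ≤ |ψ q| + |ψ q| + M * |ψ q| := by
          exact add_le_add (add_le_add (hall _) (hall _))
            (mul_le_mul_of_nonneg_right (hU q) hpos.le)
      _ = _ := by ring
  exact le_of_mul_le_mul_right h2 hpos

lemma three_term_growth {a : ℕ → ℝ} {K γ : ℝ} {L : ℕ} (hK : 0 ≤ K) (hγ : 0 ≤ γ)
    (h0 : a 0 = 0) (h1 : a 1 ≤ 2 * γ)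
    (hrec : ∀ i, i + 2 ≤ L → a (i + 2) ≤ K * a (i + 1) + a i + γ) :
    ∀ i ≤ L, a i ≤ 2 * γ * (K + 2) ^ i := by
  intro i
  induction i using Nat.strong_induction_on with
  | _ i ih =>
    intro hi
    match i with
    | 0 => simp [h0, hγ]
    | 1 => simp only [pow_one]; nlinarith
    | i + 2 =>
      have e1 := ih (i + 1) (by omega) (by omega)
      have e0 := ih i (by omega) (by omega)
      have := hrec i hi
      have hp : (1 : ℝ) ≤ (K + 2) ^ i := one_le_pow₀ (by linarith)
      have : a (i + 2) ≤ K * (2 * γ * (K + 2) ^ (i + 1)) + 2 * γ * (K + 2) ^ i + γ := by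
        nlinarith
      have hp2 : γ ≤ γ * (K + 2) ^ i := by nlinarith
      have hX : 0 ≤ γ * (K + 2) ^ i := by positivity
      rw [pow_succ] at this ⊢
      rw [pow_succ]
      nlinarith [mul_nonneg hX hK]

/-- Dirichlet box eigenvalues are simple. -/
lemma IsBoxEigenvector.eq_or_eq_neg {U : ℤ → ℝ} {N : ℕ} {e M : ℝ} {ψ χ : ℤ → ℝ}
    (hψ : IsBoxEigenvector U N e ψ) (hχ : IsBoxEigenvector U N e χ) (hU : ∀ n, |U n| ≤ M) :
    χ = ψ ∨ χ = -ψ := by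
  have hM : 0 ≤ M := (abs_nonneg _).trans (hU 0)
  have key : ∀ f : ℤ → ℝ, f (-(N : ℤ)) = 0 → f (-(N : ℤ) - 1) = 0 →
      (∀ n ∈ latticeBox N, f (n + 1) + f (n - 1) + U n * f n = e * f n) →
      ∀ n ∈ latticeBox N, f n = 0 := by
    intro f h1 h0 hf n hn
    have he := hψ.abs_energy_le hU
    have h := three_term_growth (a := fun i => |f (-(N : ℤ) - 1 + i)|) (K := 2 * M + 2) (γ := 0)
      (L := 2 * N + 2) (by positivity) le_rfl (by simpa using h0) (by simp [h1])
      (by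
        intro i hi
        have := hf (-(N : ℤ) + i) (by simp only [Finset.mem_Icc]; omega)
        have e1 : -(N : ℤ) - 1 + ((i + 2 : ℕ) : ℤ) = -(N : ℤ) + i + 1 := by push_cast; ring
        have e2 : -(N : ℤ) - 1 + ((i + 1 : ℕ) : ℤ) = -(N : ℤ) + i := by push_cast; ring
        have e3 : -(N : ℤ) - 1 + (i : ℤ) = -(N : ℤ) + i - 1 := by ring
        simp only [e1, e2, e3]
        have h4 : f (-(N : ℤ) + i + 1)
            = (e - U (-(N : ℤ) + i)) * f (-(N : ℤ) + i) - f (-(N : ℤ) + i - 1) := by linarith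
        rw [h4]
        have h5 := hU (-(N : ℤ) + i)
        calc _ ≤ |e - U (-(N : ℤ) + i)| * |f (-(N : ℤ) + i)| + |f (-(N : ℤ) + i - 1)| := by
              rw [← abs_mul]; exact abs_sub _ _
          _ ≤ _ := by
              rw [add_zero]; gcongr
              exact (abs_sub _ _).trans (by linarith))
      (n + N + 1).toNat (by simp only [Finset.mem_Icc] at hn; omega)
    simp only [Finset.mem_Icc] at hn
    have e4 : -(N : ℤ) - 1 + (n + N + 1).toNat = n := by omega
    rw [e4] at h
    simpa using h
  have hc : ψ (-N) ≠ 0 := by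
    intro hc
    have := key ψ hc (hψ.zero _ (by simp)) hψ.eqn
    have h2 := hψ.norm
    rw [Finset.sum_eq_zero fun n hn => by rw [this n hn]; simp] at h2
    norm_num at h2
  set r := χ (-N) / ψ (-N) with hr
  have hχψ : ∀ n, χ n = r * ψ n := by
    intro n
    by_cases hn : n ∈ latticeBox N
    · have := key (fun n => χ n - r * ψ n) (by simp only [hr]; field_simp; ring)
        (by simp only [hψ.zero (-(N : ℤ) - 1) (by simp), hχ.zero (-(N : ℤ) - 1) (by simp)]; simp)
        (fun n hn => by linear_combination hχ.eqn n hn - r * hψ.eqn n hn) n hn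
      simpa [sub_eq_zero] using this
    · rw [hψ.zero n hn, hχ.zero n hn]; simp
  have hr2 : r ^ 2 = 1 := by
    have := hχ.norm
    simp only [hχψ, mul_pow] at this
    rw [← Finset.mul_sum, hψ.norm] at this
    simpa using this
  rcases (by simpa using hr2 : r = 1 ∨ r = -1) with h | h
  · left; ext n; simp [hχψ, h]
  · right; ext n; simp [hχψ, h]

lemma exists_boxEigenbasis (U : ℤ → ℝ) (N : ℕ) :
    ∃ (e : latticeBox N → ℝ) (φ : latticeBox N → ℤ → ℝ),
      (∀ j, IsBoxEigenvector U N (e j) (φ j)) ∧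
      (∀ i j, i ≠ j → ∑ n ∈ latticeBox N, φ i n * φ j n = 0) ∧
      ∀ f g : ℤ → ℝ, ∑ j, (∑ n ∈ latticeBox N, f n * φ j n) * (∑ n ∈ latticeBox N, g n * φ j n)
        = ∑ n ∈ latticeBox N, f n * g n := by
  classical
  let A : Matrix (latticeBox N) (latticeBox N) ℝ := Matrix.of fun i j =>
    (if (j : ℤ) = i + 1 then 1 else 0) + (if (j : ℤ) = i - 1 then 1 else 0)
      + (if (j : ℤ) = i then U i else 0)
  have hA : A.IsHermitian := by
    refine Matrix.IsHermitian.ext fun i j => ?_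
    simp only [A, Matrix.of_apply, star_trivial]
    have h1 : (i : ℤ) = j + 1 ↔ (j : ℤ) = i - 1 := by omega
    have h2 : (i : ℤ) = j - 1 ↔ (j : ℤ) = i + 1 := by omega
    simp only [h1, h2]
    by_cases h : (j : ℤ) = i
    · simp [h]
    · simp [h, Ne.symm h, add_comm]
  let b := hA.eigenvectorBasis
  let φ : latticeBox N → ℤ → ℝ := fun j n => if h : n ∈ latticeBox N then b j ⟨n, h⟩ else 0
  have hφ : ∀ j (i : latticeBox N), φ j i = b j i := fun j i => dif_pos i.2
  have hz : ∀ j, ∀ n ∉ latticeBox N, φ j n = 0 := fun j n hn => by simp only [φ, dif_neg hn]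
  have hsum : ∀ (f : ℤ → ℝ) (j), ∑ n ∈ latticeBox N, f n * φ j n
      = inner ℝ (b j) (WithLp.toLp 2 (fun i : latticeBox N => f i)) := by
    intro f j
    rw [← Finset.sum_coe_sort]
    simp [PiLp.inner_apply, hφ]
  have hb : ∀ i j, ∑ n ∈ latticeBox N, φ i n * φ j n = if i = j then 1 else 0 := by
    intro i j
    rw [hsum]
    have : WithLp.toLp 2 (fun k : latticeBox N => φ i k) = b i := by
      ext k; simp [hφ]
    rw [this, orthonormal_iff_ite.1 b.orthonormal j i]
    simp only [eq_comm]
  have hsingle : ∀ (j) (m : ℤ), ∑ k : latticeBox N, (if (k : ℤ) = m then φ j k else 0) = φ j m := by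
    intro j m
    rw [Finset.sum_coe_sort (latticeBox N) (fun k => if k = m then φ j k else 0)]
    rw [Finset.sum_ite_eq']
    split_ifs with h
    · rfl
    · exact (hz j m h).symm
  refine ⟨hA.eigenvalues, φ, fun j => ⟨hz j, fun n hn => ?_, ?_⟩, fun i j hij => ?_, fun f g => ?_⟩
  · have h := congrFun (hA.mulVec_eigenvectorBasis j) ⟨n, hn⟩
    simp only [Matrix.mulVec, dotProduct, Pi.smul_apply, smul_eq_mul] at h
    have h2 : ∑ k : latticeBox N, A ⟨n, hn⟩ k * φ j k = hA.eigenvalues j * φ j n := by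
      simp only [hφ]
      rw [h]
      congr 1
      exact (hφ j ⟨n, hn⟩).symm
    rw [← h2]
    simp only [A, Matrix.of_apply, add_mul, Finset.sum_add_distrib, ite_mul, one_mul, zero_mul]
    rw [hsingle, hsingle, ← hsingle j n, Finset.mul_sum]
    simp only [mul_ite, mul_zero]
  · have := hb j j
    simpa [sq] using this
  · simp [hb, hij]
  · simp only [hsum]
    have := b.sum_inner_mul_inner (WithLp.toLp 2 (fun i : latticeBox N => f i))
      (WithLp.toLp 2 (fun i : latticeBox N => g i))
    rw [← Finset.sum_coe_sort (latticeBox N) fun n => f n * g n]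
    have h3 : ∑ i : latticeBox N, f i * g i = inner ℝ (WithLp.toLp 2 (fun i : latticeBox N => f i))
      (WithLp.toLp 2 (fun i : latticeBox N => g i)) := by
        simp [PiLp.inner_apply, mul_comm]
    rw [h3, ← this]
    refine Finset.sum_congr rfl fun i _ => ?_
    rw [real_inner_comm (b i)]

/-- A complete orthonormal family of box eigenvectors. -/
structure IsBoxEigenbasis (U : ℤ → ℝ) (N : ℕ) (e : latticeBox N → ℝ)
    (φ : latticeBox N → ℤ → ℝ) : Prop where
  eig : ∀ j, IsBoxEigenvector U N (e j) (φ j)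
  orth : ∀ i j, i ≠ j → ∑ n ∈ latticeBox N, φ i n * φ j n = 0
  parseval : ∀ f g : ℤ → ℝ,
    ∑ j, (∑ n ∈ latticeBox N, f n * φ j n) * (∑ n ∈ latticeBox N, g n * φ j n)
      = ∑ n ∈ latticeBox N, f n * g n

lemma exists_isBoxEigenbasis (U : ℤ → ℝ) (N : ℕ) : ∃ e φ, IsBoxEigenbasis U N e φ := by
  obtain ⟨e, φ, h1, h2, h3⟩ := exists_boxEigenbasis U N
  exact ⟨e, φ, h1, h2, h3⟩

lemma IsBoxEigenbasis.sum_two_point_sq {U : ℤ → ℝ} {N : ℕ} {e : latticeBox N → ℝ}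
    {φ : latticeBox N → ℤ → ℝ} (h : IsBoxEigenbasis U N e φ) {p q : ℤ} (hp : p ∈ latticeBox N)
    (hq : q ∈ latticeBox N) (hpq : p ≠ q) (a b : ℝ) :
    ∑ j, (a * φ j p + b * φ j q) ^ 2 = a ^ 2 + b ^ 2 := by
  have hs : ∀ g : ℤ → ℝ, ∑ n ∈ latticeBox N,
      ((if n = p then a else 0) + (if n = q then b else 0)) * g n = a * g p + b * g q := by
    intro g
    simp only [add_mul, ite_mul, zero_mul, Finset.sum_add_distrib, Finset.sum_ite_eq', hp, hq,
      if_true]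
  have := h.parseval (fun n => (if n = p then a else 0) + (if n = q then b else 0))
    (fun n => (if n = p then a else 0) + (if n = q then b else 0))
  simp only [hs] at this
  simp only [← sq] at this
  rw [this]
  simp [hpq, hpq.symm]
  ring

lemma IsBoxEigenvector.sum_box_mul {U : ℤ → ℝ} {N N' : ℕ} {e : ℝ} {ψ : ℤ → ℝ}
    (hψ : IsBoxEigenvector U N e ψ) (h : N ≤ N') (f : ℤ → ℝ) :
    ∑ n ∈ latticeBox N', ψ n * f n = ∑ n ∈ latticeBox N, ψ n * f n := by
  symm
  exact Finset.sum_subset (latticeBox_mono h) fun n _ hn => by rw [hψ.zero n hn, zero_mul]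

/-- The approximate eigenvector `ψ` has small components along eigenvectors with distant
eigenvalues. -/
lemma IsBoxEigenbasis.sum_sub_sq_mul {U U' : ℤ → ℝ} {N N' : ℕ} {E : latticeBox N' → ℝ}
    {φ : latticeBox N' → ℤ → ℝ} {e : ℝ} {ψ : ℤ → ℝ} (h : IsBoxEigenbasis U' N' E φ)
    (hψ : IsBoxEigenvector U N e ψ) (hU : ∀ n ∈ latticeBox N, U' n = U n) (hN : N < N') :
    ∑ j, (E j - e) ^ 2 * (∑ n ∈ latticeBox N, ψ n * φ j n) ^ 2
      = ψ N ^ 2 + ψ (-N) ^ 2 := by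
  rw [← h.sum_two_point_sq (p := N + 1) (q := -N - 1) (by simp; omega) (by simp; omega)
    (by omega) (ψ N) (ψ (-N))]
  refine Finset.sum_congr rfl fun j _ => ?_
  rw [← mul_pow, hψ.overlap (U' := U') fun n hn =>
    (h.eig j).eqn n (latticeBox_mono hN.le hn)]
  rw [Finset.sum_eq_zero fun n hn => by rw [hU n hn, sub_self, zero_mul], add_zero]

lemma IsBoxEigenbasis.sum_sub_sq_mul' {U U' : ℤ → ℝ} {N N' : ℕ} {e : latticeBox N → ℝ}
    {ψ : latticeBox N → ℤ → ℝ} {E : ℝ} {φ : ℤ → ℝ} (h : IsBoxEigenbasis U N e ψ)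
    (hφ : IsBoxEigenvector U' N' E φ) (hU : ∀ n ∈ latticeBox N, U' n = U n) (hN : N ≤ N')
    (h0 : 0 < N) :
    ∑ j, (E - e j) ^ 2 * (∑ n ∈ latticeBox N, ψ j n * φ n) ^ 2
      = φ (N + 1) ^ 2 + φ (-N - 1) ^ 2 := by
  rw [← h.sum_two_point_sq (p := N) (q := -N) (by simp) (by simp)
    (by omega) (φ (N + 1)) (φ (-N - 1))]
  refine Finset.sum_congr rfl fun j _ => ?_
  rw [← mul_pow, (h.eig j).overlap (U' := U') fun n hn =>
    hφ.eqn n (latticeBox_mono hN hn)]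
  rw [Finset.sum_eq_zero fun n hn => by rw [hU n hn, sub_self, zero_mul], add_zero]
  ring

lemma IsBoxEigenvector.reflect {U : ℤ → ℝ} {N : ℕ} {e : ℝ} {ψ : ℤ → ℝ}
    (hψ : IsBoxEigenvector U N e ψ) :
    IsBoxEigenvector (fun n => U (-n)) N e (fun n => ψ (-n)) := by
  refine ⟨fun n hn => hψ.zero _ ?_, fun n hn => ?_, ?_⟩
  · simp only [Finset.mem_Icc] at hn ⊢; omega
  · have := hψ.eqn (-n) (by simp only [Finset.mem_Icc] at hn ⊢; omega)
    rw [neg_add, neg_sub, ← this]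
    have h1 : -n + -1 = -n - 1 := by ring
    have h2 : 1 - n = -n + 1 := by ring
    rw [h1, h2]; ring
  · rw [← hψ.norm]
    refine Finset.sum_nbij' (fun n => -n) (fun n => -n) ?_ ?_ ?_ ?_ ?_
    · intro n; simp only [Finset.mem_Icc]; omega
    · intro n; simp only [Finset.mem_Icc]; omega
    · simp
    · simp
    · simp

lemma IsBoxEigenvector.le_of_right_le {U : ℤ → ℝ} {N : ℕ} {e M c : ℝ} {ψ : ℤ → ℝ}
    (hψ : IsBoxEigenvector U N e ψ) (hU : ∀ n, |U n| ≤ M) {p : ℤ} (hp : p ≤ N)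
    (h0 : |ψ p| ≤ c) (h1 : |ψ (p + 1)| ≤ c) (i : ℕ) (hi : -(N : ℤ) ≤ p - i) :
    |ψ (p - i)| ≤ c * (2 * M + 4) ^ i := by
  have hM : 0 ≤ M := (abs_nonneg _).trans (hU 0)
  have he := hψ.abs_energy_le hU
  have hc : 0 ≤ c := (abs_nonneg _).trans h0
  suffices |ψ (p - i)| ≤ c * (2 * M + 4) ^ i ∧ |ψ (p + 1 - i)| ≤ c * (2 * M + 4) ^ i from this.1
  induction i with
  | zero => simpa using ⟨h0, h1⟩
  | succ i ih =>
    obtain ⟨i1, i2⟩ := ih (by push_cast at hi; omega)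
    have hX : 0 ≤ c * (2 * M + 4) ^ i := by positivity
    have e1 : p + 1 - ((i + 1 : ℕ) : ℤ) = p - i := by push_cast; ring
    have e2 : p - ((i + 1 : ℕ) : ℤ) = p - i - 1 := by push_cast; ring
    rw [e1, e2, pow_succ, ← mul_assoc]
    refine ⟨?_, by nlinarith⟩
    have h := hψ.eqn (p - i) (by simp only [Finset.mem_Icc]; push_cast at hi; omega)
    have h4 : ψ (p - i - 1) = (e - U (p - i)) * ψ (p - i) - ψ (p + 1 - i) := by
      have : p - (i : ℤ) + 1 = p + 1 - i := by ring
      rw [this] at h; linarith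
    have h5 : |e - U (p - i)| ≤ 2 * M + 2 := (abs_sub _ _).trans (by linarith [hU (p - i)])
    rw [h4]
    calc _ ≤ |e - U (p - i)| * |ψ (p - i)| + |ψ (p + 1 - i)| := by
          rw [← abs_mul]; exact abs_sub _ _
      _ ≤ (2 * M + 2) * (c * (2 * M + 4) ^ i) + c * (2 * M + 4) ^ i := by gcongr
      _ ≤ _ := by nlinarith

/-- An eigenvector that is not small on `[-N, N]` is not small at `N + 1` or at `N + 2`. -/
lemma IsBoxEigenvector.exists_right_ge {U : ℤ → ℝ} {N N' : ℕ} {e M κ : ℝ} {ψ : ℤ → ℝ}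
    (hψ : IsBoxEigenvector U N' e ψ) (hU : ∀ n, |U n| ≤ M) (hN : N + 2 ≤ N') (hκ : 0 < κ)
    {n : ℤ} (hn : n ∈ latticeBox N) (h : κ * (2 * M + 4) ^ (2 * N + 1) < |ψ n|) :
    κ ≤ |ψ (N + 1)| ∨ κ ≤ |ψ (N + 2)| := by
  by_contra hcon
  push Not at hcon
  have hM : 0 ≤ M := (abs_nonneg _).trans (hU 0)
  simp only [Finset.mem_Icc] at hn
  have := hψ.le_of_right_le hU (p := N + 1) (c := κ) (by omega) hcon.1.le
    (by rw [add_assoc]; exact hcon.2.le) (N + 1 - n).toNat (by omega)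
  have e1 : (N : ℤ) + 1 - (N + 1 - n).toNat = n := by omega
  rw [e1] at this
  have h2 : κ * (2 * M + 4) ^ (N + 1 - n).toNat ≤ κ * (2 * M + 4) ^ (2 * N + 1) := by
    gcongr
    · linarith
    · omega
  linarith

set_option maxHeartbeats 800000 in
/-- Quantitative gap between the eigenvalues of two orthogonal eigenvectors that both carry most
of their mass in `[-N, N]`. -/
lemma IsBoxEigenvector.gap {U : ℤ → ℝ} {N N' : ℕ} {E₁ E₂ M : ℝ} {φ₁ φ₂ : ℤ → ℝ}
    (h₁ : IsBoxEigenvector U N' E₁ φ₁) (h₂ : IsBoxEigenvector U N' E₂ φ₂)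
    (hU : ∀ n, |U n| ≤ M) (hN : N ≤ N') (horth : ∑ n ∈ latticeBox N', φ₁ n * φ₂ n = 0)
    (hm₁ : ∑ n ∈ latticeBox N' \ latticeBox N, φ₁ n ^ 2 ≤ 1 / 4)
    (hm₂ : ∑ n ∈ latticeBox N' \ latticeBox N, φ₂ n ^ 2 ≤ 1 / 4) :
    1 ≤ |E₁ - E₂| * (4 * (2 * M + 4) ^ (2 * N) * (2 * N + 1)) := by
  have hM : 0 ≤ M := (abs_nonneg _).trans (hU 0)
  have hsub := latticeBox_mono hN
  set γ := |E₁ - E₂| with hγ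
  have hγ0 : 0 ≤ γ := abs_nonneg _
  have hs₁ := Finset.sum_sdiff (f := fun n => φ₁ n ^ 2) hsub
  have hs₂ := Finset.sum_sdiff (f := fun n => φ₂ n ^ 2) hsub
  have hs := Finset.sum_sdiff (f := fun n => φ₁ n * φ₂ n) hsub
  rw [h₁.norm] at hs₁
  rw [h₂.norm] at hs₂
  rw [horth] at hs
  obtain ⟨q, hq, hq2⟩ : ∃ q ∈ latticeBox N, 3 / 4 / (2 * N + 1) ≤ φ₁ q ^ 2 := by
    apply Finset.exists_le_of_sum_le (s := latticeBox N) ⟨0, by simp⟩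
    rw [Finset.sum_const, card_latticeBox, nsmul_eq_mul]
    push_cast
    rw [mul_div_cancel₀ _ (by positivity)]
    linarith
  have hW : ∀ n, -(N' : ℤ) ≤ n + 1 → n ≤ N' → |wronskian φ₁ φ₂ n| ≤ γ := by
    intro n hn hn'
    have h := sum_Icc_sub_sub_one (wronskian φ₁ φ₂) (-(N' : ℤ)) n (by omega)
    have hz : wronskian φ₁ φ₂ (-(N' : ℤ) - 1) = 0 := by
      simp [wronskian, h₁.zero (-(N' : ℤ) - 1) (by simp), h₂.zero (-(N' : ℤ) - 1) (by simp)]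
    rw [hz, sub_zero] at h
    rw [← h]
    have hsub' : Finset.Icc (-(N' : ℤ)) n ⊆ latticeBox N' := Finset.Icc_subset_Icc_right hn'
    calc _ = |∑ k ∈ Finset.Icc (-(N' : ℤ)) n, (E₁ - E₂) * (φ₁ k * φ₂ k)| := by
          congr 1
          refine Finset.sum_congr rfl fun k hk => ?_
          rw [wronskian_sub]
          linear_combination φ₂ k * h₁.eqn k (hsub' hk) - φ₁ k * h₂.eqn k (hsub' hk)
      _ ≤ ∑ k ∈ Finset.Icc (-(N' : ℤ)) n, γ * ((φ₁ k ^ 2 + φ₂ k ^ 2) / 2) := by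
          refine (Finset.abs_sum_le_sum_abs _ _).trans (Finset.sum_le_sum fun k _ => ?_)
          rw [abs_mul]
          refine mul_le_mul_of_nonneg_left ?_ hγ0
          rw [abs_le]
          constructor <;> nlinarith [sq_nonneg (φ₁ k + φ₂ k), sq_nonneg (φ₁ k - φ₂ k)]
      _ ≤ ∑ k ∈ latticeBox N', γ * ((φ₁ k ^ 2 + φ₂ k ^ 2) / 2) :=
          Finset.sum_le_sum_of_subset_of_nonneg hsub' fun k _ _ => by positivity
      _ = γ := by
          rw [← Finset.mul_sum, ← Finset.sum_div, Finset.sum_add_distrib, h₁.norm, h₂.norm]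
          norm_num
  set χ : ℤ → ℝ := fun n => φ₂ q * φ₁ n - φ₁ q * φ₂ n with hχ
  have hq' := hq
  simp only [Finset.mem_Icc] at hq'
  have hχ0 : χ q = 0 := by simp only [hχ]; ring
  have hχ1 : |χ (q + 1)| ≤ γ := by
    have := hW q (by omega) (by omega)
    have e : χ (q + 1) = wronskian φ₁ φ₂ q := by simp only [hχ, wronskian]; ring
    rwa [e]
  have hχ2 : |χ (q - 1)| ≤ γ := by
    have := hW (q - 1) (by omega) (by omega)
    have e : χ (q - 1) = -wronskian φ₁ φ₂ (q - 1) := by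
      simp only [hχ, wronskian, sub_add_cancel]; ring
    rwa [e, abs_neg]
  have hE := h₁.abs_energy_le hU
  have heq : ∀ n ∈ latticeBox N, χ (n + 1) + χ (n - 1)
      = (E₁ - U n) * χ n + (E₁ - E₂) * (φ₁ q * φ₂ n) := by
    intro n hn
    simp only [hχ]
    linear_combination φ₂ q * h₁.eqn n (hsub hn) - φ₁ q * h₂.eqn n (hsub hn)
  have hrhs : ∀ n, |(E₁ - U n) * χ n + (E₁ - E₂) * (φ₁ q * φ₂ n)|
      ≤ (2 * M + 2) * |χ n| + γ := by
    intro n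
    calc _ ≤ |E₁ - U n| * |χ n| + |E₁ - E₂| * (|φ₁ q| * |φ₂ n|) := by
          rw [← abs_mul, ← abs_mul, ← abs_mul]; exact abs_add_le _ _
      _ ≤ (2 * M + 2) * |χ n| + γ * (1 * 1) := by
          gcongr
          · exact (abs_sub _ _).trans (by linarith [hU n])
          · exact h₁.abs_le_one q
          · exact h₂.abs_le_one n
      _ = _ := by ring
  set ξ := 2 * γ * (2 * M + 4) ^ (2 * N) with hξ
  have hpow : ∀ i ≤ 2 * N, 2 * γ * (2 * M + 2 + 2) ^ i ≤ ξ := by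
    intro i hi
    have : 2 * M + 2 + 2 = 2 * M + 4 := by ring
    rw [hξ, this]
    gcongr
    linarith
  have hbd : ∀ n ∈ latticeBox N, |χ n| ≤ ξ := by
    intro n hn
    simp only [Finset.mem_Icc] at hn
    rcases le_total q n with hqn | hqn
    · have h := three_term_growth (a := fun i => |χ (q + i)|) (K := 2 * M + 2) (γ := γ)
        (L := (n - q).toNat) (by positivity) hγ0 (by simp [hχ0])
        (by simp only [Nat.cast_one]; linarith)
        (by
          intro i hi
          have h := heq (q + i + 1) (by simp only [Finset.mem_Icc]; omega)
          have h' := hrhs (q + i + 1)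
          have e1 : q + ((i + 2 : ℕ) : ℤ) = q + i + 1 + 1 := by push_cast; ring
          have e2 : q + ((i + 1 : ℕ) : ℤ) = q + i + 1 := by push_cast; ring
          have e3 : q + (i : ℤ) + 1 - 1 = q + i := by ring
          rw [← h, e3] at h'
          simp only [e1, e2]
          have := abs_sub (χ (q + i + 1 + 1) + χ (q + i)) (χ (q + i))
          rw [add_sub_cancel_right] at this
          linarith)
        (n - q).toNat le_rfl
      have e1 : q + ((n - q).toNat : ℤ) = n := by omega
      simp only [e1] at h
      exact h.trans (hpow _ (by omega))
    · have h := three_term_growth (a := fun i => |χ (q - i)|) (K := 2 * M + 2) (γ := γ)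
        (L := (q - n).toNat) (by positivity) hγ0 (by simp [hχ0])
        (by simp only [Nat.cast_one]; linarith)
        (by
          intro i hi
          have h := heq (q - i - 1) (by simp only [Finset.mem_Icc]; omega)
          have h' := hrhs (q - i - 1)
          have e1 : q - ((i + 2 : ℕ) : ℤ) = q - i - 1 - 1 := by push_cast; ring
          have e2 : q - ((i + 1 : ℕ) : ℤ) = q - i - 1 := by push_cast; ring
          have e3 : q - (i : ℤ) - 1 + 1 = q - i := by ring
          rw [← h, e3] at h'
          simp only [e1, e2]
          have := abs_sub (χ (q - i) + χ (q - i - 1 - 1)) (χ (q - i))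
          rw [add_sub_cancel_left] at this
          linarith)
        (q - n).toNat le_rfl
      have e1 : q - ((q - n).toNat : ℤ) = n := by omega
      simp only [e1] at h
      exact h.trans (hpow _ (by omega))
  have hξ0 : 0 ≤ ξ := by positivity
  have hχsum : ∑ n ∈ latticeBox N, χ n ^ 2 ≤ (2 * N + 1) * ξ ^ 2 := by
    calc _ ≤ ∑ n ∈ latticeBox N, ξ ^ 2 := Finset.sum_le_sum fun n hn =>
          sq_le_sq' (abs_le.1 (hbd n hn)).1 (abs_le.1 (hbd n hn)).2
      _ = _ := by rw [Finset.sum_const, card_latticeBox, nsmul_eq_mul]; push_cast; ring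
  have hχexp : ∑ n ∈ latticeBox N, χ n ^ 2
      = φ₂ q ^ 2 * ∑ n ∈ latticeBox N, φ₁ n ^ 2 + φ₁ q ^ 2 * ∑ n ∈ latticeBox N, φ₂ n ^ 2
        - 2 * φ₁ q * φ₂ q * ∑ n ∈ latticeBox N, φ₁ n * φ₂ n := by
    simp only [Finset.mul_sum, ← Finset.sum_add_distrib, ← Finset.sum_sub_distrib]
    exact Finset.sum_congr rfl fun n _ => by simp only [hχ]; ring
  have hP : |∑ n ∈ latticeBox N' \ latticeBox N, φ₁ n * φ₂ n| ≤ 1 / 4 := by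
    calc _ ≤ ∑ n ∈ latticeBox N' \ latticeBox N, (φ₁ n ^ 2 + φ₂ n ^ 2) / 2 := by
          refine (Finset.abs_sum_le_sum_abs _ _).trans (Finset.sum_le_sum fun k _ => ?_)
          rw [abs_le]
          constructor <;> nlinarith [sq_nonneg (φ₁ k + φ₂ k), sq_nonneg (φ₁ k - φ₂ k)]
      _ ≤ 1 / 4 := by
          rw [← Finset.sum_div, Finset.sum_add_distrib]; linarith
  have hP' : |∑ n ∈ latticeBox N, φ₁ n * φ₂ n| ≤ 1 / 4 := by
    have : ∑ n ∈ latticeBox N, φ₁ n * φ₂ n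
        = -∑ n ∈ latticeBox N' \ latticeBox N, φ₁ n * φ₂ n := by linarith
    rwa [this, abs_neg]
  have hlow : φ₁ q ^ 2 / 2 ≤ (2 * N + 1) * ξ ^ 2 := by
    refine le_trans ?_ (hχexp ▸ hχsum)
    have a1 : 3 / 4 ≤ ∑ n ∈ latticeBox N, φ₁ n ^ 2 := by linarith
    have a2 : 3 / 4 ≤ ∑ n ∈ latticeBox N, φ₂ n ^ 2 := by linarith
    have a3 : 2 * φ₁ q * φ₂ q * ∑ n ∈ latticeBox N, φ₁ n * φ₂ n
        ≤ (φ₁ q ^ 2 + φ₂ q ^ 2) * (1 / 4) := by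
      refine (le_abs_self _).trans ?_
      rw [abs_mul]
      refine mul_le_mul ?_ hP' (abs_nonneg _) (by positivity)
      rw [abs_le]
      constructor <;> nlinarith [sq_nonneg (φ₁ q + φ₂ q), sq_nonneg (φ₁ q - φ₂ q)]
    linarith [mul_le_mul_of_nonneg_left a1 (sq_nonneg (φ₂ q)),
      mul_le_mul_of_nonneg_left a2 (sq_nonneg (φ₁ q)), sq_nonneg (φ₂ q)]
  have hfin : 3 / 8 ≤ ((2 * N + 1) * ξ) ^ 2 := by
    have h1 : 3 / 4 / (2 * N + 1) / 2 ≤ (2 * N + 1) * ξ ^ 2 := by linarith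
    rw [div_div, div_le_iff₀ (by positivity)] at h1
    nlinarith
  have hpos : 0 ≤ (2 * N + 1) * ξ := by positivity
  have : 1 / 2 ≤ (2 * N + 1) * ξ := by nlinarith
  have e : γ * (4 * (2 * M + 4) ^ (2 * N) * (2 * N + 1)) = 2 * ((2 * N + 1) * ξ) := by
    rw [hξ]; ring
  rw [e]; linarith

/-- A box eigenvector that is small at the ends of the box and whose eigenvalue is isolated. -/
structure IsLocalizedEigenvector (U : ℤ → ℝ) (N : ℕ) (δ g e : ℝ) (ψ : ℤ → ℝ) : Prop
    extends IsBoxEigenvector U N e ψ where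
  right : |ψ N| ≤ δ
  left : |ψ (-N)| ≤ δ
  gap : ∀ E χ, IsBoxEigenvector U N E χ → |E - e| < g → χ = ψ ∨ χ = -ψ

lemma IsLocalizedEigenvector.neg {U : ℤ → ℝ} {N : ℕ} {δ g e : ℝ} {ψ : ℤ → ℝ}
    (h : IsLocalizedEigenvector U N δ g e ψ) : IsLocalizedEigenvector U N δ g e (-ψ) :=
  ⟨h.toIsBoxEigenvector.neg, by simpa using h.right, by simpa using h.left,
    fun E χ hχ hE => by
      rcases h.gap E χ hχ hE with h | h
      · right; rw [h, neg_neg]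
      · left; exact h⟩

/-- Compatibility of the potential `U'` on the box of size `N'` with the potential `U` on the
smaller box of size `N`. -/
structure IsNonresonant (U U' : ℤ → ℝ) (N N' : ℕ) (h κ₁ κ₂ δ' : ℝ) : Prop where
  agree : ∀ n ∈ latticeBox N, U' n = U n
  shell : ∀ e ψ E φ, IsBoxEigenvector U N e ψ → IsBoxEigenvector U' N' E φ → |E - e| ≤ 2 * h →
    ∀ q ∈ latticeBox N' \ latticeBox N, |φ q| ≤ κ₁
  boundary : ∀ E φ, IsBoxEigenvector U' N' E φ → ∀ n ∈ latticeBox N, κ₂ ≤ |φ n| →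
    |φ N'| ≤ δ' ∧ |φ (-N')| ≤ δ'

lemma IsNonresonant.shell_mass {U U' : ℤ → ℝ} {N N' : ℕ} {h κ₁ κ₂ δ' e E : ℝ} {ψ φ : ℤ → ℝ}
    (H : IsNonresonant U U' N N' h κ₁ κ₂ δ') (hψ : IsBoxEigenvector U N e ψ)
    (hφ : IsBoxEigenvector U' N' E φ) (hE : |E - e| ≤ 2 * h) :
    ∑ n ∈ latticeBox N' \ latticeBox N, φ n ^ 2 ≤ (2 * N' + 1) * κ₁ ^ 2 := by
  calc _ ≤ ∑ n ∈ latticeBox N' \ latticeBox N, κ₁ ^ 2 := Finset.sum_le_sum fun n hn => by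
        have := H.shell e ψ E φ hψ hφ hE n hn
        exact sq_le_sq' (abs_le.1 this).1 (abs_le.1 this).2
    _ ≤ ∑ n ∈ latticeBox N', κ₁ ^ 2 :=
        Finset.sum_le_sum_of_subset_of_nonneg Finset.sdiff_subset fun _ _ _ => sq_nonneg _
    _ = _ := by rw [Finset.sum_const, card_latticeBox, nsmul_eq_mul]; push_cast; ring

lemma IsNonresonant.localized {U U' : ℤ → ℝ} {N N' : ℕ} {h κ₁ κ₂ δ' g' M e E : ℝ} {ψ φ : ℤ → ℝ}
    (H : IsNonresonant U U' N N' h κ₁ κ₂ δ') (hU' : ∀ n, |U' n| ≤ M) (hN : N ≤ N')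
    (hκ₁ : (2 * N' + 1) * κ₁ ^ 2 ≤ 1 / 4) (hκ₂ : (2 * N + 1) * κ₂ ^ 2 ≤ 3 / 4)
    (hg' : g' ≤ h) (hg'' : g' * (4 * (2 * M + 4) ^ (2 * N) * (2 * N + 1)) ≤ 1)
    (hκ : 0 ≤ κ₂)
    (hψ : IsBoxEigenvector U N e ψ) (hφ : IsBoxEigenvector U' N' E φ) (hE : |E - e| ≤ h) :
    IsLocalizedEigenvector U' N' δ' g' E φ := by
  have hM : 0 ≤ M := (abs_nonneg _).trans (hU' 0)
  have hh : 0 ≤ h := (abs_nonneg _).trans hE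
  have hm := (H.shell_mass hψ hφ (by linarith)).trans hκ₁
  have hs := Finset.sum_sdiff (f := fun n => φ n ^ 2) (latticeBox_mono hN)
  rw [hφ.norm] at hs
  obtain ⟨n, hn, hn2⟩ : ∃ n ∈ latticeBox N, κ₂ ^ 2 ≤ φ n ^ 2 := by
    apply Finset.exists_le_of_sum_le (s := latticeBox N) ⟨0, by simp⟩
    rw [Finset.sum_const, card_latticeBox, nsmul_eq_mul]
    push_cast
    linarith
  have hb := H.boundary E φ hφ n hn (by rw [← abs_of_nonneg hκ]; exact sq_le_sq.1 hn2)
  refine ⟨hφ, hb.1, hb.2, fun E' χ hχ hE' => ?_⟩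
  rcases eq_or_ne E' E with rfl | hne
  · exact hφ.eq_or_eq_neg hχ hU'
  · exfalso
    have horth : ∑ n ∈ latticeBox N', χ n * φ n = 0 := by
      have := hχ.overlap hφ.eqn
      rw [hφ.zero _ (by simp), hφ.zero _ (by simp)] at this
      simp only [mul_zero, add_zero, sub_self, zero_mul, Finset.sum_const_zero, mul_eq_zero,
        sub_eq_zero] at this
      exact this.resolve_left hne.symm
    have hm' := (H.shell_mass hψ hχ
      (by have := abs_sub_le E' E e; linarith)).trans hκ₁
    have := hχ.gap hφ hU' hN horth hm' hm
    have hpos : 0 < 4 * (2 * M + 4) ^ (2 * N) * (2 * N + 1) := by positivity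
    nlinarith

lemma IsNonresonant.extend {U U' : ℤ → ℝ} {N N' : ℕ} {h κ₁ κ₂ δ δ' g g' M e : ℝ} {ψ : ℤ → ℝ}
    (H : IsNonresonant U U' N N' h κ₁ κ₂ δ') (hU' : ∀ n, |U' n| ≤ M) (hN : N < N') (h0 : 0 < N)
    (hκ₁ : (2 * N' + 1) * κ₁ ^ 2 ≤ 1 / 4) (hκ₂ : (2 * N + 1) * κ₂ ^ 2 ≤ 3 / 4)
    (hg' : g' ≤ h) (hg'' : g' * (4 * (2 * M + 4) ^ (2 * N) * (2 * N + 1)) ≤ 1)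
    (hκ : 0 ≤ κ₂) (hh : 0 < h) (hδ : 2 * δ ^ 2 < h ^ 2) (hg : h ≤ g / 2)
    (hψ : IsLocalizedEigenvector U N δ g e ψ) :
    ∃ E φ, IsLocalizedEigenvector U' N' δ' g' E φ ∧ |E - e| ≤ h ∧
      ∑ n ∈ latticeBox N', (φ n - ψ n) ^ 2
        ≤ 2 * (8 * κ₁ ^ 2 / g ^ 2 + (2 * N' + 1) * κ₁ ^ 2) := by
  classical
  have hψ' := hψ.toIsBoxEigenvector
  obtain ⟨E, φ, hb⟩ := exists_isBoxEigenbasis U' N'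
  have hNN := latticeBox_mono hN.le
  have hnorm : ∑ j, (∑ n ∈ latticeBox N, ψ n * φ j n) ^ 2 = 1 := by
    have := hb.parseval ψ ψ
    simp only [hψ'.sum_box_mul hN.le] at this
    simp only [← sq] at this
    rw [this, hψ'.norm]
  obtain ⟨j, hj⟩ : ∃ j, |E j - e| ≤ h := by
    by_contra! hcon
    have h1 := hb.sum_sub_sq_mul hψ' H.agree hN
    have h2 : h ^ 2 * ∑ j, (∑ n ∈ latticeBox N, ψ n * φ j n) ^ 2
        ≤ ∑ j, (E j - e) ^ 2 * (∑ n ∈ latticeBox N, ψ n * φ j n) ^ 2 := by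
      rw [Finset.mul_sum]
      refine Finset.sum_le_sum fun j _ => mul_le_mul_of_nonneg_right ?_ (sq_nonneg _)
      rw [← sq_abs (E j - e)]
      exact pow_le_pow_left₀ hh.le (hcon j).le 2
    rw [hnorm, h1] at h2
    have h3 : ψ N ^ 2 ≤ δ ^ 2 := sq_le_sq' (abs_le.1 hψ.right).1 (abs_le.1 hψ.right).2
    have h4 : ψ (-N) ^ 2 ≤ δ ^ 2 := sq_le_sq' (abs_le.1 hψ.left).1 (abs_le.1 hψ.left).2
    linarith
  obtain ⟨χ, hχ, hc0⟩ : ∃ χ, IsBoxEigenvector U' N' (E j) χ ∧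
      0 ≤ ∑ n ∈ latticeBox N, ψ n * χ n := by
    rcases le_total 0 (∑ n ∈ latticeBox N, ψ n * φ j n) with h | h
    · exact ⟨_, hb.eig j, h⟩
    · exact ⟨_, (hb.eig j).neg, by simpa using h⟩
  refine ⟨E j, χ, H.localized hU' hN.le hκ₁ hκ₂ hg' hg'' hκ hψ' hχ hj, hj, ?_⟩
  set c := ∑ n ∈ latticeBox N, ψ n * χ n with hc
  have hexp : ∑ n ∈ latticeBox N', (χ n - ψ n) ^ 2 = 2 - 2 * c := by
    have e1 : ∑ n ∈ latticeBox N', ψ n ^ 2 = 1 := by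
      simp only [sq]; rw [hψ'.sum_box_mul hN.le, ← hψ'.norm]; simp only [sq]
    have e2 := hψ'.sum_box_mul hN.le χ
    have : ∀ n, (χ n - ψ n) ^ 2 = χ n ^ 2 - 2 * (ψ n * χ n) + ψ n ^ 2 := fun n => by ring
    simp only [this]
    rw [Finset.sum_add_distrib, Finset.sum_sub_distrib, ← Finset.mul_sum, e1, e2, hχ.norm]
    ring
  have hc1 : c ≤ 1 := by
    have : 0 ≤ ∑ n ∈ latticeBox N', (χ n - ψ n) ^ 2 := Finset.sum_nonneg fun _ _ => sq_nonneg _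
    linarith
  rw [hexp]
  obtain ⟨ε, η, hη⟩ := exists_isBoxEigenbasis U N
  have hin : ∑ n ∈ latticeBox N, χ n ^ 2 ≥ 1 - (2 * N' + 1) * κ₁ ^ 2 := by
    have := H.shell_mass hψ' hχ (by linarith)
    have hs := Finset.sum_sdiff (f := fun n => χ n ^ 2) hNN
    rw [hχ.norm] at hs
    linarith
  have hpars : ∑ i, (∑ n ∈ latticeBox N, η i n * χ n) ^ 2 = ∑ n ∈ latticeBox N, χ n ^ 2 := by
    have := hη.parseval χ χ
    simp only [← sq] at this
    rw [← this]
    simp only [mul_comm]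
  have hg0 : 0 < g := by linarith
  set S : Finset (latticeBox N) := Finset.univ.filter fun i => η i = ψ ∨ η i = -ψ with hS
  have hfar : ∑ i ∈ Sᶜ, (∑ n ∈ latticeBox N, η i n * χ n) ^ 2 ≤ 8 * κ₁ ^ 2 / g ^ 2 := by
    have h1 := hη.sum_sub_sq_mul' hχ H.agree hN.le h0
    have hk : ∀ q ∈ latticeBox N' \ latticeBox N, χ q ^ 2 ≤ κ₁ ^ 2 := fun q hq => by
      have := H.shell _ _ _ _ hψ' hχ (by linarith) q hq
      exact sq_le_sq' (abs_le.1 this).1 (abs_le.1 this).2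
    have k1 := hk (N + 1) (by simp only [Finset.mem_sdiff, Finset.mem_Icc]; omega)
    have k2 := hk (-N - 1) (by simp only [Finset.mem_sdiff, Finset.mem_Icc]; omega)
    rw [le_div_iff₀ (by positivity), mul_comm, Finset.mul_sum]
    have h2 : ∑ i ∈ Sᶜ, g ^ 2 * (∑ n ∈ latticeBox N, η i n * χ n) ^ 2
        ≤ ∑ i ∈ Sᶜ, 4 * ((E j - ε i) ^ 2 * (∑ n ∈ latticeBox N, η i n * χ n) ^ 2) := by
      refine Finset.sum_le_sum fun i hi => ?_
      rw [← mul_assoc]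
      refine mul_le_mul_of_nonneg_right ?_ (sq_nonneg _)
      have hgi : g ≤ |ε i - e| := by
        by_contra! hlt
        have := hψ.gap _ _ (hη.eig i) hlt
        simp [hS] at hi
        tauto
      have := abs_sub_le (ε i) (E j) e
      rw [abs_sub_comm (ε i) (E j)] at this
      have h3 : g / 2 ≤ |E j - ε i| := by linarith
      rw [← sq_abs (E j - ε i)]
      nlinarith
    have h3 : ∑ i ∈ Sᶜ, 4 * ((E j - ε i) ^ 2 * (∑ n ∈ latticeBox N, η i n * χ n) ^ 2)
        ≤ ∑ i, 4 * ((E j - ε i) ^ 2 * (∑ n ∈ latticeBox N, η i n * χ n) ^ 2) :=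
      Finset.sum_le_sum_of_subset_of_nonneg (Finset.subset_univ _) fun _ _ _ => by positivity
    rw [← Finset.mul_sum Finset.univ, h1] at h3
    linarith
  have hnear : ∑ i ∈ S, (∑ n ∈ latticeBox N, η i n * χ n) ^ 2 ≤ c ^ 2 := by
    have hterm : ∀ i ∈ S, (∑ n ∈ latticeBox N, η i n * χ n) ^ 2 = c ^ 2 := by
      intro i hi
      simp only [hS, Finset.mem_filter, Finset.mem_univ, true_and] at hi
      rcases hi with hi | hi
      · rw [hi]
      · rw [hi]; simp only [Pi.neg_apply, neg_mul, Finset.sum_neg_distrib, neg_sq, hc]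
    rw [Finset.sum_congr rfl hterm, Finset.sum_const, nsmul_eq_mul]
    have hcard : S.card ≤ 1 := by
      rw [Finset.card_le_one]
      intro i hi k hk
      by_contra hne
      have h1 := hη.orth i k hne
      simp only [hS, Finset.mem_filter, Finset.mem_univ, true_and] at hi hk
      have h2 := hψ'.norm
      simp only [sq] at h2
      rcases hi with hi | hi <;> rcases hk with hk | hk <;> rw [hi, hk] at h1 <;>
        simp [h2] at h1
    have : (S.card : ℝ) ≤ 1 := by exact_mod_cast hcard
    nlinarith [sq_nonneg c]
  have hsplit := Finset.sum_add_sum_compl S fun i => (∑ n ∈ latticeBox N, η i n * χ n) ^ 2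
  have hcc : c ^ 2 ≤ c := by nlinarith
  linarith

lemma IsNonresonant.abs_sum_le {U U' : ℤ → ℝ} {N N' : ℕ} {h κ₁ κ₂ δ δ' e R Z : ℝ} {ψ f : ℤ → ℝ}
    (H : IsNonresonant U U' N N' h κ₁ κ₂ δ') (hN : N < N') (hh : 0 < h) (hδ : 0 ≤ δ)
    (hψ : IsBoxEigenvector U N e ψ) (hr : |ψ N| ≤ δ) (hl : |ψ (-N)| ≤ δ) (hR : 0 ≤ R)
    (hf : ∑ n ∈ latticeBox N', f n ^ 2 ≤ R ^ 2) (hZ : 0 ≤ Z)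
    (hφ : ∀ E φ, IsBoxEigenvector U' N' E φ → |E - e| ≤ h →
      |∑ n ∈ latticeBox N', f n * φ n| ≤ Z) :
    |∑ n ∈ latticeBox N, ψ n * f n| ≤ (2 * N' + 1) * Z + 2 * δ * R / h := by
  obtain ⟨E, φ, hb⟩ := exists_isBoxEigenbasis U' N'
  set c := fun j => ∑ n ∈ latticeBox N, ψ n * φ j n with hc
  set F := fun j => ∑ n ∈ latticeBox N', f n * φ j n with hF
  have hpar := hb.parseval ψ f
  simp only [hψ.sum_box_mul hN.le] at hpar
  have hnorm : ∑ j, c j ^ 2 = 1 := by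
    have := hb.parseval ψ ψ
    simp only [hψ.sum_box_mul hN.le] at this
    simp only [← sq] at this
    rw [this, hψ.norm]
  have hF2 : ∑ j, F j ^ 2 ≤ R ^ 2 := by
    refine le_trans (le_of_eq ?_) hf
    simpa only [← sq] using hb.parseval f f
  have hdist : ∑ j, ((E j - e) * c j) ^ 2 ≤ 2 * δ ^ 2 := by
    have h1 := hb.sum_sub_sq_mul hψ H.agree hN
    simp only [mul_pow]
    rw [h1]
    have h3 : ψ N ^ 2 ≤ δ ^ 2 := sq_le_sq' (abs_le.1 hr).1 (abs_le.1 hr).2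
    have h4 : ψ (-N) ^ 2 ≤ δ ^ 2 := sq_le_sq' (abs_le.1 hl).1 (abs_le.1 hl).2
    linarith
  have hc1 : ∀ j, |c j| ≤ 1 := fun j => by
    rw [← sq_le_one_iff_abs_le_one, ← hnorm]
    exact Finset.single_le_sum (f := fun j => c j ^ 2) (fun _ _ => sq_nonneg _)
      (Finset.mem_univ j)
  have hterm : ∀ j, |c j * F j| ≤ Z + |(E j - e) * c j| * |F j| / h := by
    intro j
    rw [abs_mul]
    rcases le_or_gt |E j - e| h with hj | hj
    · have h1 := hφ _ _ (hb.eig j) hj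
      have : |c j| * |F j| ≤ 1 * Z := mul_le_mul (hc1 j) h1 (abs_nonneg _) zero_le_one
      have : 0 ≤ |(E j - e) * c j| * |F j| / h := by positivity
      linarith
    · have : |c j| * |F j| ≤ |(E j - e) * c j| * |F j| / h := by
        rw [le_div_iff₀ hh, abs_mul]
        have : 0 ≤ |c j| * |F j| := by positivity
        nlinarith
      linarith
  have hCS : ∑ j, |(E j - e) * c j| * |F j| ≤ 2 * δ * R := by
    have h1 := Finset.sum_mul_sq_le_sq_mul_sq Finset.univ (fun j => |(E j - e) * c j|)
      (fun j => |F j|)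
    simp only [sq_abs] at h1
    refine abs_le_of_sq_le_sq' ?_ (by positivity) |>.2
    have : (∑ j, ((E j - e) * c j) ^ 2) * ∑ j, F j ^ 2 ≤ 2 * δ ^ 2 * R ^ 2 :=
      mul_le_mul hdist hF2 (Finset.sum_nonneg fun _ _ => sq_nonneg _) (by positivity)
    nlinarith [mul_nonneg (sq_nonneg δ) (sq_nonneg R)]
  rw [← hpar]
  calc _ ≤ ∑ j, (Z + |(E j - e) * c j| * |F j| / h) :=
        (Finset.abs_sum_le_sum_abs _ _).trans (Finset.sum_le_sum fun j _ => hterm j)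
    _ = (2 * N' + 1) * Z + (∑ j, |(E j - e) * c j| * |F j|) / h := by
        rw [Finset.sum_add_distrib, ← Finset.sum_div, Finset.sum_const, Finset.card_univ,
          Fintype.card_coe, card_latticeBox, nsmul_eq_mul]
        push_cast; ring
    _ ≤ _ := by gcongr

/-- The uniform probability measure on `[-ε, ε]`. -/
def uniformOn (ε : ℝ) : Measure ℝ :=
  (ENNReal.ofReal (2 * ε))⁻¹ • volume.restrict (Set.Icc (-ε) ε)

instance sFinite_uniformOn (ε : ℝ) : SFinite (uniformOn ε) := by
  unfold uniformOn; infer_instance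

lemma uniformOn_le (ε : ℝ) : uniformOn ε ≤ (ENNReal.ofReal (2 * ε))⁻¹ • volume := by
  unfold uniformOn
  exact smul_mono_right _ Measure.restrict_le_self

lemma isProbabilityMeasure_uniformOn {ε : ℝ} (hε : 0 < ε) : IsProbabilityMeasure (uniformOn ε) := by
  constructor
  simp only [uniformOn, Measure.smul_apply, Measure.restrict_apply_univ, Real.volume_Icc,
    smul_eq_mul]
  rw [show ε - -ε = 2 * ε by ring]
  exact ENNReal.inv_mul_cancel (by simpa using hε) ENNReal.ofReal_ne_top

lemma ae_uniformOn_mem (ε : ℝ) : ∀ᵐ v ∂uniformOn ε, v ∈ Set.Icc (-ε) ε :=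
  Measure.ae_smul_measure (ae_restrict_mem measurableSet_Icc) _

lemma sq_lintegral_mul_le {α : Type*} [MeasurableSpace α] {μ : Measure α} {f g : α → ℝ≥0∞}
    (hf : AEMeasurable f μ) (hg : AEMeasurable g μ) :
    (∫⁻ x, f x * g x ∂μ) ^ 2 ≤ (∫⁻ x, f x ^ 2 ∂μ) * ∫⁻ x, g x ^ 2 ∂μ := by
  have h := ENNReal.lintegral_mul_le_Lp_mul_Lq μ (p := 2) (q := 2)
    (by constructor <;> norm_num) hf hg
  simp only [Pi.mul_apply, ENNReal.rpow_two] at h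
  calc _ ≤ ((∫⁻ x, f x ^ 2 ∂μ) ^ (1 / 2 : ℝ) * (∫⁻ x, g x ^ 2 ∂μ) ^ (1 / 2 : ℝ)) ^ 2 := by gcongr
    _ = _ := by
      rw [mul_pow, ← ENNReal.rpow_natCast, ← ENNReal.rpow_natCast, ← ENNReal.rpow_mul,
        ← ENNReal.rpow_mul]
      norm_num

/-- Average of `f` over the interval of radius `ε`. -/
def smoothing (ε : ℝ) (f : ℝ → ℝ≥0∞) (y : ℝ) : ℝ≥0∞ := ∫⁻ v, f (y - v) ∂uniformOn ε

lemma measurable_smoothing {ε : ℝ} {f : ℝ → ℝ≥0∞} (hf : Measurable f) :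
    Measurable (smoothing ε f) :=
  Measurable.lintegral_prod_right' (f := fun p : ℝ × ℝ => f (p.1 - p.2)) (by fun_prop)

lemma sq_smoothing_le {ε : ℝ} (hε : 0 < ε) {f : ℝ → ℝ≥0∞} (hf : Measurable f) (y : ℝ) :
    smoothing ε f y ^ 2 ≤ smoothing ε (fun x => f x ^ 2) y := by
  have := isProbabilityMeasure_uniformOn hε
  have h := sq_lintegral_mul_le (μ := uniformOn ε) (f := fun v => f (y - v)) (g := fun _ => 1)
    (by fun_prop) (by fun_prop)
  simpa [smoothing] using h

lemma smoothing_le (ε : ℝ) (f : ℝ → ℝ≥0∞) (y : ℝ) :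
    smoothing ε f y ≤ (ENNReal.ofReal (2 * ε))⁻¹ * ∫⁻ x, f x := by
  calc _ ≤ ∫⁻ v, f (y - v) ∂((ENNReal.ofReal (2 * ε))⁻¹ • volume) :=
        lintegral_mono' (uniformOn_le ε) le_rfl
    _ = _ := by rw [lintegral_smul_measure, lintegral_sub_left_eq_self f y]; rfl

lemma lintegral_smoothing_mul {ε : ℝ} {f g : ℝ → ℝ≥0∞} (hf : Measurable f) (hg : Measurable g) :
    ∫⁻ y, smoothing ε f y * g y = ∫⁻ x, f x * ∫⁻ v, g (x + v) ∂uniformOn ε := by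
  calc _ = ∫⁻ y, ∫⁻ v, f (y - v) * g y ∂uniformOn ε := by
        refine lintegral_congr fun y => ?_
        rw [lintegral_mul_const _ (by fun_prop), smoothing]
    _ = ∫⁻ v, ∫⁻ y, f (y - v) * g y ∂volume ∂uniformOn ε :=
        lintegral_lintegral_swap (by fun_prop)
    _ = ∫⁻ v, ∫⁻ x, f x * g (x + v) ∂volume ∂uniformOn ε := by
        refine lintegral_congr fun v => ?_
        rw [← lintegral_add_right_eq_self _ v]
        simp
    _ = ∫⁻ x, ∫⁻ v, f x * g (x + v) ∂uniformOn ε :=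
        lintegral_lintegral_swap (by fun_prop)
    _ = _ := by
        refine lintegral_congr fun x => ?_
        rw [lintegral_const_mul _ (by fun_prop)]

lemma lintegral_sq_smoothing_le {ε : ℝ} (hε : 0 < ε) {f : ℝ → ℝ≥0∞} (hf : Measurable f) :
    ∫⁻ y, smoothing ε f y ^ 2 ≤ ∫⁻ x, f x ^ 2 := by
  have := isProbabilityMeasure_uniformOn hε
  refine (lintegral_mono fun y => sq_smoothing_le hε hf y).trans (le_of_eq ?_)
  have := lintegral_smoothing_mul (ε := ε) (f := fun x => f x ^ 2) (g := fun _ => 1)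
    (by fun_prop) (by fun_prop)
  simpa using this

/-- One step of the projective transfer operator. -/
def transferStep (ε b : ℝ) (f : ℝ → ℝ≥0∞) (x : ℝ) : ℝ≥0∞ :=
  ENNReal.ofReal |x|⁻¹ * smoothing ε f (b - x⁻¹)

lemma measurable_transferStep {ε b : ℝ} {f : ℝ → ℝ≥0∞} (hf : Measurable f) :
    Measurable (transferStep ε b f) := by
  have := measurable_smoothing (ε := ε) hf
  unfold transferStep
  fun_prop

lemma setLIntegral_sq_transferStep {ε b : ℝ} {f : ℝ → ℝ≥0∞} {s : Set ℝ}
    (hs : MeasurableSet s) (h0 : (0 : ℝ) ∉ s) :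
    ∫⁻ x in s, transferStep ε b f x ^ 2
      = ∫⁻ y in (fun x => b - x⁻¹) '' s, smoothing ε f y ^ 2 := by
  rw [lintegral_image_eq_lintegral_abs_deriv_mul (f' := fun x => (x ^ 2)⁻¹) hs]
  · refine lintegral_congr fun x => ?_
    rw [transferStep, mul_pow, ← ENNReal.ofReal_pow (by positivity),
      abs_of_nonneg (a := (x ^ 2)⁻¹) (by positivity)]
    simp
  · intro x hx
    have hx0 : x ≠ 0 := fun h => h0 (h ▸ hx)
    have := ((hasDerivAt_inv hx0).const_sub b).hasDerivWithinAt (s := s)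
    simpa using this
  · intro x _ y _ hxy
    simpa using hxy

lemma lintegral_sq_transferStep_le (ε b : ℝ) (f : ℝ → ℝ≥0∞) :
    ∫⁻ x, transferStep ε b f x ^ 2 ≤ ∫⁻ y, smoothing ε f y ^ 2 := by
  have h : ∫⁻ x, transferStep ε b f x ^ 2 = ∫⁻ x in {0}ᶜ, transferStep ε b f x ^ 2 := by
    rw [restrict_compl_singleton]
  rw [h, setLIntegral_sq_transferStep (measurableSet_singleton 0).compl (by simp)]
  exact setLIntegral_le_lintegral _ _

lemma setLIntegral_sq_transferStep_tail_le {ε b X : ℝ} (hε : 0 < ε) (hX : 0 < X) {f : ℝ → ℝ≥0∞}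
    (hf : Measurable f) :
    ∫⁻ x in {x | X < |x|}, transferStep ε b f x ^ 2
      ≤ ENNReal.ofReal (1 / (ε * X)) * ∫⁻ x, f x ^ 2 := by
  have hm : MeasurableSet {x : ℝ | X < |x|} := measurableSet_lt measurable_const (by fun_prop)
  rw [setLIntegral_sq_transferStep hm (by simpa using hX.le)]
  have hsub : (fun x : ℝ => b - x⁻¹) '' {x | X < |x|} ⊆ Set.Icc (b - X⁻¹) (b + X⁻¹) := by
    rintro _ ⟨x, hx, rfl⟩
    have : |x⁻¹| ≤ X⁻¹ := by
      rw [abs_inv]; exact inv_anti₀ hX (le_of_lt hx)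
    have := abs_le.1 this
    constructor <;> linarith
  calc _ ≤ ∫⁻ y in Set.Icc (b - X⁻¹) (b + X⁻¹), smoothing ε f y ^ 2 :=
        lintegral_mono_set hsub
    _ ≤ ∫⁻ y in Set.Icc (b - X⁻¹) (b + X⁻¹), (ENNReal.ofReal (2 * ε))⁻¹ * ∫⁻ x, f x ^ 2 :=
        lintegral_mono fun y => (sq_smoothing_le hε hf y).trans (smoothing_le _ _ _)
    _ = _ := by
        rw [setLIntegral_const, Real.volume_Icc, mul_right_comm,
          ← ENNReal.ofReal_inv_of_pos (by positivity), ← ENNReal.ofReal_mul (by positivity)]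
        congr 2
        field_simp
        ring

lemma lintegral_uniformOn_ofReal {ε : ℝ} (hε : 0 < ε) {g : ℝ → ℝ} (hg : Continuous g)
    (h0 : ∀ v, 0 ≤ g v) :
    ∫⁻ v, ENNReal.ofReal (g v) ∂uniformOn ε = ENNReal.ofReal ((∫ v in -ε..ε, g v) / (2 * ε)) := by
  rw [uniformOn, lintegral_smul_measure,
    ← ofReal_integral_eq_lintegral_ofReal (hg.integrableOn_Icc) (Filter.Eventually.of_forall h0),
    intervalIntegral.integral_of_le (by linarith), integral_Icc_eq_integral_Ioc,
    ← ENNReal.ofReal_inv_of_pos (by positivity), smul_eq_mul,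
    ← ENNReal.ofReal_mul (by positivity)]
  congr 1
  ring

lemma lintegral_uniformOn_cos {ε X t : ℝ} (hε : 0 < ε) (hX : 0 < X) (ht : |t| ≤ 1) (x : ℝ) :
    ∫⁻ v, ENNReal.ofReal (2 + t * Real.cos ((x + v) / X)) ∂uniformOn ε
      = ENNReal.ofReal (2 + t * (Real.sin (ε / X) / (ε / X)) * Real.cos (x / X)) := by
  rw [lintegral_uniformOn_ofReal hε (by fun_prop)]
  · congr 1
    have h : ∫ v in -ε..ε, (2 + t * Real.cos ((x + v) / X))
        = 4 * ε + t * (X * (2 * Real.cos (x / X) * Real.sin (ε / X))) := by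
      rw [intervalIntegral.integral_add (by simp) (Continuous.intervalIntegrable (by fun_prop) _ _),
        intervalIntegral.integral_const, intervalIntegral.integral_const_mul]
      have h2 := intervalIntegral.integral_comp_add_div (a := -ε) (b := ε)
        (f := Real.cos) hX.ne' (x / X)
      have h3 : ∀ v, Real.cos ((x + v) / X) = Real.cos (x / X + v / X) := fun v => by rw [add_div]
      simp only [h3, h2, integral_cos, neg_div, Real.sin_add, smul_eq_mul, Real.sin_neg,
        Real.cos_neg]
      ring
    rw [h]
    field_simp
    ring
  · intro v
    have h1 := Real.abs_cos_le_one ((x + v) / X)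
    have : |t * Real.cos ((x + v) / X)| ≤ 1 := by
      rw [abs_mul]; exact mul_le_one₀ ht (abs_nonneg _) h1
    linarith [(abs_le.1 this).1]

lemma sin_div_self_le {θ : ℝ} (h0 : 0 < θ) (h1 : θ ≤ 1) :
    0 ≤ Real.sin θ / θ ∧ Real.sin θ / θ ≤ 1 - θ ^ 2 / 10 := by
  have hb := Real.sin_bound (x := θ) (by rwa [abs_of_pos h0])
  rw [abs_of_pos h0] at hb
  have h2 := abs_le.1 hb
  refine ⟨div_nonneg (Real.sin_nonneg_of_nonneg_of_le_pi h0.le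
    (by linarith [Real.pi_gt_three])) h0.le, ?_⟩
  rw [div_le_iff₀ h0]
  have h3 : θ ^ 4 ≤ θ ^ 3 := pow_le_pow_of_le_one h0.le h1 (by norm_num)
  have h4 : 0 < θ ^ 3 := by positivity
  nlinarith

lemma lintegral_sq_smoothing_le_weighted {ε X : ℝ} (hε : 0 < ε) (hX : 0 < X) (hεX : ε / X ≤ 1)
    {k : ℝ → ℝ≥0∞} (hk : Measurable k) :
    ∫⁻ y, smoothing ε k y ^ 2 ≤ ∫⁻ x, k x ^ 2 * ENNReal.ofReal
      ((2 + (Real.sin (ε / X) / (ε / X)) ^ 2 * Real.cos (x / X)) / (2 + Real.cos (x / X))) := by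
  have hs := sin_div_self_le (θ := ε / X) (by positivity) hεX
  set s := Real.sin (ε / X) / (ε / X) with hsdef
  have hs1 : |s| ≤ 1 := by rw [abs_of_nonneg hs.1]; nlinarith [sq_nonneg (ε / X)]
  set h : ℝ → ℝ := fun x => 2 + Real.cos (x / X) with hh
  have hpos : ∀ x, 0 < h x := fun x => by
    simp only [hh]; linarith [Real.neg_one_le_cos (x / X)]
  have hc : Continuous h := by fun_prop
  have hkey : ∀ y, smoothing ε k y ^ 2
      ≤ smoothing ε (fun x => k x ^ 2 * ENNReal.ofReal (h x)⁻¹) y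
        * ENNReal.ofReal (2 + s * Real.cos (y / X)) := by
    intro y
    have h1 := sq_lintegral_mul_le (μ := uniformOn ε)
      (f := fun v => k (y - v) * ENNReal.ofReal (Real.sqrt (h (y - v)))⁻¹)
      (g := fun v => ENNReal.ofReal (Real.sqrt (h (y - v)))) (by fun_prop) (by fun_prop)
    have h2 : ∀ v, k (y - v) * ENNReal.ofReal (Real.sqrt (h (y - v)))⁻¹
        * ENNReal.ofReal (Real.sqrt (h (y - v))) = k (y - v) := fun v => by
      rw [mul_assoc, ← ENNReal.ofReal_mul (by positivity),
        inv_mul_cancel₀ (Real.sqrt_pos.2 (hpos _)).ne']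
      simp
    have h3 : ∀ v, (k (y - v) * ENNReal.ofReal (Real.sqrt (h (y - v)))⁻¹) ^ 2
        = k (y - v) ^ 2 * ENNReal.ofReal (h (y - v))⁻¹ := fun v => by
      rw [mul_pow, ← ENNReal.ofReal_pow (by positivity), inv_pow, Real.sq_sqrt (hpos _).le]
    have h4 : ∀ v, ENNReal.ofReal (Real.sqrt (h (y - v))) ^ 2
        = ENNReal.ofReal (2 + 1 * Real.cos ((-y + v) / X)) := fun v => by
      rw [← ENNReal.ofReal_pow (by positivity), Real.sq_sqrt (hpos _).le]
      simp only [hh, one_mul]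
      rw [← Real.cos_neg ((-y + v) / X)]
      congr 3
      ring
    simp only [h2, h3, h4] at h1
    rw [lintegral_uniformOn_cos hε hX (by simp), one_mul, neg_div, Real.cos_neg] at h1
    exact h1
  refine (lintegral_mono hkey).trans (le_of_eq ?_)
  rw [lintegral_smoothing_mul (by fun_prop) (by fun_prop)]
  refine lintegral_congr fun x => ?_
  rw [lintegral_uniformOn_cos hε hX hs1, mul_assoc,
    ← ENNReal.ofReal_mul (inv_nonneg.2 (hpos _).le)]
  congr 2
  simp only [← hsdef, hh, sq]
  field_simp

lemma cos_weight_le {s c : ℝ} (hs0 : 0 ≤ s) (hs1 : s ≤ 1) (hc : -1 ≤ c) :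
    (2 + s ^ 2 * c) / (2 + c) ≤ 1 + (1 - s ^ 2) := by
  have : s ^ 2 ≤ 1 := by nlinarith
  rw [div_le_iff₀ (by linarith)]
  nlinarith [mul_nonneg (sub_nonneg.2 this) (by linarith : 0 ≤ 1 + c)]

lemma cos_weight_le_of_ge {s c : ℝ} (hs0 : 0 ≤ s) (hs1 : s ≤ 1) (hc : 1 / 2 ≤ c) :
    (2 + s ^ 2 * c) / (2 + c) ≤ 1 - (1 - s ^ 2) / 5 := by
  have : s ^ 2 ≤ 1 := by nlinarith
  rw [div_le_iff₀ (by linarith)]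
  nlinarith [mul_nonneg (sub_nonneg.2 this) (by linarith : 0 ≤ c - 1 / 2)]

/-- Two steps of the transfer operator contract the `L²` norm. -/
lemma lintegral_sq_transferStep_two_le {ε : ℝ} (hε : 0 < ε) (hε1 : ε ≤ 1) (b b' : ℝ)
    {f : ℝ → ℝ≥0∞} (hf : Measurable f) :
    ∫⁻ x, transferStep ε b' (transferStep ε b f) x ^ 2
      ≤ ENNReal.ofReal (1 - ε ^ 4 / 14400) * ∫⁻ x, f x ^ 2 := by
  set X := 12 / ε with hXdef
  have hX : 0 < X := by positivity
  have hθ : ε / X = ε ^ 2 / 12 := by rw [hXdef]; field_simp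
  have hθ1 : ε / X ≤ 1 := by rw [hθ]; nlinarith
  have hs := sin_div_self_le (θ := ε / X) (by positivity) hθ1
  set s := Real.sin (ε / X) / (ε / X) with hsdef
  have hs1 : s ≤ 1 := by nlinarith [sq_nonneg (ε / X)]
  set σ := 1 - s ^ 2 with hσ
  have hσ0 : 0 ≤ σ := by nlinarith
  have hσ1 : σ ≤ 1 := by nlinarith
  have hσ2 : (ε / X) ^ 2 / 10 ≤ σ := by nlinarith
  set k := transferStep ε b f with hkdef
  have hk : Measurable k := measurable_transferStep hf
  have ha : ∫⁻ x, k x ^ 2 ≤ ∫⁻ x, f x ^ 2 :=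
    (lintegral_sq_transferStep_le ε b f).trans (lintegral_sq_smoothing_le hε hf)
  have hm : MeasurableSet {x : ℝ | X < |x|} := measurableSet_lt measurable_const (by fun_prop)
  have htail : ∫⁻ x in {x | X < |x|}, k x ^ 2 ≤ ENNReal.ofReal (1 / 12) * ∫⁻ x, f x ^ 2 := by
    have := setLIntegral_sq_transferStep_tail_le (b := b) hε hX hf
    have e : ε * X = 12 := by rw [hXdef]; field_simp
    rwa [e] at this
  calc _ ≤ ∫⁻ y, smoothing ε k y ^ 2 := lintegral_sq_transferStep_le _ _ _
    _ ≤ _ := lintegral_sq_smoothing_le_weighted hε hX hθ1 hk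
    _ ≤ ∫⁻ x, (ENNReal.ofReal (1 - σ / 5) * k x ^ 2
        + ENNReal.ofReal (6 / 5 * σ) * {x : ℝ | X < |x|}.indicator (fun x => k x ^ 2) x) := by
        refine lintegral_mono fun x => ?_
        simp only [← hsdef]
        by_cases hx : X < |x|
        · rw [Set.indicator_of_mem (by exact hx), ← add_mul,
            ← ENNReal.ofReal_add (by linarith) (by positivity), mul_comm]
          gcongr
          refine (cos_weight_le hs.1 hs1 (Real.neg_one_le_cos _)).trans (le_of_eq ?_)
          rw [hσ]; ring
        · rw [Set.indicator_of_notMem (by exact hx), mul_zero, add_zero, mul_comm]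
          gcongr
          refine cos_weight_le_of_ge hs.1 hs1 ?_
          have h1 : |x / X| ≤ 1 := by
            rw [abs_div, abs_of_pos hX, div_le_one hX]; exact not_lt.1 hx
          have h2 := Real.one_sub_sq_div_two_le_cos (x := x / X)
          have h3 := (sq_le_one_iff_abs_le_one _).2 h1
          linarith
    _ = ENNReal.ofReal (1 - σ / 5) * (∫⁻ x, k x ^ 2)
        + ENNReal.ofReal (6 / 5 * σ) * ∫⁻ x in {x : ℝ | X < |x|}, k x ^ 2 := by
        rw [lintegral_add_left (by fun_prop), lintegral_const_mul _ (by fun_prop),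
          lintegral_const_mul _ ((by fun_prop : Measurable fun x => k x ^ 2).indicator hm),
          lintegral_indicator hm]
    _ ≤ ENNReal.ofReal (1 - σ / 5) * (∫⁻ x, f x ^ 2)
        + ENNReal.ofReal (6 / 5 * σ) * (ENNReal.ofReal (1 / 12) * ∫⁻ x, f x ^ 2) := by
        gcongr
    _ = ENNReal.ofReal (1 - σ / 10) * ∫⁻ x, f x ^ 2 := by
        rw [← mul_assoc, ← add_mul, ← ENNReal.ofReal_mul (by positivity),
          ← ENNReal.ofReal_add (by linarith) (by positivity)]
        congr 2
        ring
    _ ≤ _ := by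
        gcongr ENNReal.ofReal ?_ * _
        rw [hθ] at hσ2
        nlinarith

/-- Expected inverse norm of the product of `n` random transfer matrices applied to `z`; the
random matrices have energies `b j - v`, with `v` uniform on `[-ε, ε]`, and the matrix with
index `0` acts last. -/
def meanInvNorm (ε : ℝ) (b : ℕ → ℝ) : ℕ → ℝ × ℝ → ℝ≥0∞
  | 0, z => ‖z‖ₑ⁻¹
  | n + 1, z => ∫⁻ v, meanInvNorm ε b n ((b n - v) * z.1 - z.2, z.1) ∂uniformOn ε

lemma measurable_meanInvNorm (ε : ℝ) (b : ℕ → ℝ) (n : ℕ) : Measurable (meanInvNorm ε b n) := by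
  induction n with
  | zero =>
    change Measurable fun z : ℝ × ℝ => ‖z‖ₑ⁻¹
    fun_prop
  | succ n ih =>
    exact Measurable.lintegral_prod_right'
      (f := fun p : (ℝ × ℝ) × ℝ => meanInvNorm ε b n ((b n - p.2) * p.1.1 - p.1.2, p.1.1))
      (ih.comp (by fun_prop))

lemma meanInvNorm_smul (ε : ℝ) (b : ℕ → ℝ) (n : ℕ) {c : ℝ} (hc : c ≠ 0) (z : ℝ × ℝ) :
    meanInvNorm ε b n (c • z) = ENNReal.ofReal |c|⁻¹ * meanInvNorm ε b n z := by
  induction n generalizing z with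
  | zero =>
    simp only [meanInvNorm]
    rw [enorm_smul, ENNReal.mul_inv (by simp [hc]) (by simp),
      ENNReal.ofReal_inv_of_pos (abs_pos.2 hc), ← Real.norm_eq_abs, ofReal_norm]
  | succ n ih =>
    simp only [meanInvNorm]
    rw [← lintegral_const_mul]
    · refine lintegral_congr fun v => ?_
      rw [← ih]
      congr 1
      ext <;> simp; ring
    · exact (measurable_meanInvNorm ε b n).comp (by fun_prop)

lemma meanInvNorm_succ_eq_transferStep (ε : ℝ) (b : ℕ → ℝ) (n : ℕ) {x : ℝ} (hx : x ≠ 0) :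
    meanInvNorm ε b (n + 1) (x, 1)
      = transferStep ε (b n) (fun y => meanInvNorm ε b n (y, 1)) x := by
  rw [transferStep, smoothing, ← lintegral_const_mul]
  · rw [meanInvNorm]
    refine lintegral_congr fun v => ?_
    rw [← meanInvNorm_smul _ _ _ hx]
    congr 1
    ext
    · simp; field_simp; ring
    · simp
  · exact (measurable_meanInvNorm ε b n).comp (by fun_prop)

lemma ae_uniformOn_ne (ε y : ℝ) : ∀ᵐ v ∂uniformOn ε, v ≠ y := by
  refine Measure.ae_smul_measure (ae_restrict_of_ae ?_) _
  exact (Set.finite_singleton y).countable.ae_notMem volume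

lemma transferStep_congr {ε b : ℝ} {f g : ℝ → ℝ≥0∞} (h : ∀ x ≠ 0, f x = g x) :
    transferStep ε b f = transferStep ε b g := by
  ext x
  unfold transferStep smoothing
  congr 1
  refine lintegral_congr_ae ?_
  filter_upwards [ae_uniformOn_ne ε (b - x⁻¹)] with v hv
  exact h _ (sub_ne_zero.2 hv.symm)

lemma lintegral_sq_congr {f g : ℝ → ℝ≥0∞} (h : ∀ x ≠ 0, f x = g x) :
    ∫⁻ x, f x ^ 2 = ∫⁻ x, g x ^ 2 := by
  refine lintegral_congr_ae ?_
  filter_upwards [(Set.finite_singleton (0 : ℝ)).countable.ae_notMem volume] with x hx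
  rw [h x hx]

lemma lintegral_sq_meanInvNorm_zero_le (ε : ℝ) (b : ℕ → ℝ) :
    ∫⁻ x, meanInvNorm ε b 0 (x, 1) ^ 2 ≤ ENNReal.ofReal 8 := by
  have hle : ∀ x : ℝ, meanInvNorm ε b 0 (x, 1) ^ 2 ≤ ENNReal.ofReal (2 * (1 + x ^ 2)⁻¹) := by
    intro x
    have hpos : 0 < ‖((x, 1) : ℝ × ℝ)‖ := by simp
    rw [meanInvNorm, ← ofReal_norm, ← ENNReal.ofReal_inv_of_pos hpos,
      ← ENNReal.ofReal_pow (by positivity)]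
    refine ENNReal.ofReal_le_ofReal ?_
    rw [inv_pow, ← div_eq_mul_inv, inv_le_comm₀ (by positivity) (by positivity), inv_div,
      div_le_iff₀ (by norm_num)]
    have h1 : |x| ≤ ‖((x, 1) : ℝ × ℝ)‖ := by simp
    have h2 : 1 ≤ ‖((x, 1) : ℝ × ℝ)‖ := by simp
    have h3 := pow_le_pow_left₀ (abs_nonneg x) h1 2
    rw [sq_abs] at h3
    nlinarith
  refine (lintegral_mono hle).trans ?_
  rw [← ofReal_integral_eq_lintegral_ofReal (integrable_inv_one_add_sq.const_mul 2)
    (Filter.Eventually.of_forall fun x => by positivity), integral_const_mul,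
    integral_univ_inv_one_add_sq]
  exact ENNReal.ofReal_le_ofReal (by linarith [Real.pi_le_four])

lemma lintegral_sq_meanInvNorm_le {ε : ℝ} (hε : 0 < ε) (hε1 : ε ≤ 1) (b : ℕ → ℝ) (n : ℕ) :
    ∫⁻ x, meanInvNorm ε b n (x, 1) ^ 2
      ≤ ENNReal.ofReal (8 * (1 - ε ^ 4 / 14400) ^ (n / 2)) := by
  have hm : ∀ n, Measurable fun x => meanInvNorm ε b n (x, 1) := fun n =>
    (measurable_meanInvNorm ε b n).comp (by fun_prop)
  have hone : ∀ n, ∫⁻ x, meanInvNorm ε b (n + 1) (x, 1) ^ 2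
      ≤ ∫⁻ x, meanInvNorm ε b n (x, 1) ^ 2 := fun n => by
    rw [lintegral_sq_congr fun x hx => meanInvNorm_succ_eq_transferStep ε b n hx]
    exact (lintegral_sq_transferStep_le _ _ _).trans (lintegral_sq_smoothing_le hε (hm n))
  have hρ : 0 ≤ 1 - ε ^ 4 / 14400 := by
    have : ε ^ 4 ≤ 1 := pow_le_one₀ hε.le hε1
    linarith
  induction n using Nat.strong_induction_on with
  | _ n ih =>
    match n with
    | 0 => simpa using lintegral_sq_meanInvNorm_zero_le ε b
    | 1 => simpa using (hone 0).trans (lintegral_sq_meanInvNorm_zero_le ε b)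
    | n + 2 =>
      rw [lintegral_sq_congr fun x hx => meanInvNorm_succ_eq_transferStep ε b (n + 1) hx,
        transferStep_congr fun x hx => meanInvNorm_succ_eq_transferStep ε b n hx]
      refine (lintegral_sq_transferStep_two_le hε hε1 _ _ (hm n)).trans ?_
      rw [show (n + 2) / 2 = n / 2 + 1 by omega, pow_succ _ (n / 2), ← mul_assoc,
        mul_comm, ENNReal.ofReal_mul (by positivity)]
      gcongr
      exact ih n (by omega)

lemma sq_meanInvNorm_le {ε : ℝ} (hε : 0 < ε) (hε1 : ε ≤ 1) (b : ℕ → ℝ) (n : ℕ) :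
    meanInvNorm ε b (n + 1) (1, 0) ^ 2
      ≤ ENNReal.ofReal (4 / ε * (1 - ε ^ 4 / 14400) ^ (n / 2)) := by
  have h : meanInvNorm ε b (n + 1) (1, 0)
      = smoothing ε (fun x => meanInvNorm ε b n (x, 1)) (b n) := by
    simp [meanInvNorm, smoothing]
  have hm : Measurable fun x => meanInvNorm ε b n (x, 1) :=
    (measurable_meanInvNorm ε b n).comp (by fun_prop)
  rw [h]
  refine (sq_smoothing_le hε hm _).trans ((smoothing_le _ _ _).trans ?_)
  calc _ ≤ (ENNReal.ofReal (2 * ε))⁻¹ * ENNReal.ofReal (8 * (1 - ε ^ 4 / 14400) ^ (n / 2)) := by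
        gcongr
        exact lintegral_sq_meanInvNorm_le hε hε1 b n
    _ = _ := by
        rw [← ENNReal.ofReal_inv_of_pos (by positivity), ← ENNReal.ofReal_mul (by positivity)]
        congr 1
        field_simp
        ring

/-- The perturbations `w` for which the box Hamiltonian with potential `U + w` has an eigenvector
with energy in `T` that is at least `κ` at `p` and at least `δ` at `p'`. -/
def resonantSet (U : ℤ → ℝ) (N : ℕ) (T : Set ℝ) (p : ℤ) (κ : ℝ) (p' : ℤ) (δ : ℝ) : Set (ℤ → ℝ) :=
  {w | ∃ E ∈ T, ∃ φ, IsBoxEigenvector (fun n => U n + w n) N E φ ∧ κ ≤ |φ p| ∧ δ ≤ |φ p'|}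

lemma isClosed_resonantSet (U : ℤ → ℝ) (N : ℕ) {T : Set ℝ} (hT : IsCompact T) (p : ℤ) (κ : ℝ)
    (p' : ℤ) (δ : ℝ) : IsClosed (resonantSet U N T p κ p' δ) := by
  set K : Set (ℝ × (ℤ → ℝ)) := T ×ˢ Set.pi Set.univ fun _ => Set.Icc (-1) 1 with hK
  have hKc : IsCompact K := hT.prod (isCompact_univ_pi fun _ => isCompact_Icc)
  have : CompactSpace K := isCompact_iff_compactSpace.1 hKc
  set Z : Set ((ℤ → ℝ) × K) :=
    {z | (∀ n, n ∉ latticeBox N → z.2.1.2 n = 0) ∧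
      (∀ n, n ∈ latticeBox N → z.2.1.2 (n + 1) + z.2.1.2 (n - 1) + (U n + z.1 n) * z.2.1.2 n
        = z.2.1.1 * z.2.1.2 n) ∧
      ∑ n ∈ latticeBox N, z.2.1.2 n ^ 2 = 1 ∧ κ ≤ |z.2.1.2 p| ∧ δ ≤ |z.2.1.2 p'|} with hZ
  have hZc : IsClosed Z := by
    simp only [hZ, Set.ofPred_and, Set.ofPred_forall]
    refine IsClosed.inter ?_ (IsClosed.inter ?_ (IsClosed.inter ?_ (IsClosed.inter ?_ ?_)))
    · exact isClosed_iInter fun n => isClosed_iInter fun _ =>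
        isClosed_eq (by fun_prop) (by fun_prop)
    · exact isClosed_iInter fun n => isClosed_iInter fun _ =>
        isClosed_eq (by fun_prop) (by fun_prop)
    · exact isClosed_eq (by fun_prop) (by fun_prop)
    · exact isClosed_le (by fun_prop) (by fun_prop)
    · exact isClosed_le (by fun_prop) (by fun_prop)
  have : resonantSet U N T p κ p' δ = Prod.fst '' Z := by
    ext w
    constructor
    · rintro ⟨E, hE, φ, hφ, h1, h2⟩
      refine ⟨(w, ⟨(E, φ), hE, fun n _ => ?_⟩), ⟨hφ.zero, hφ.eqn, hφ.norm, h1, h2⟩, rfl⟩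
      exact abs_le.1 (hφ.abs_le_one n)
    · rintro ⟨⟨w', ⟨⟨E, φ⟩, hE, _⟩⟩, ⟨h0, h1, h2, h3, h4⟩, rfl⟩
      exact ⟨E, hE, φ, ⟨h0, h1, h2⟩, h3, h4⟩
  rw [this]
  exact isClosedMap_fst_of_compactSpace _ hZc

lemma measurableSet_resonantSet (U : ℤ → ℝ) (N : ℕ) {T : Set ℝ} (hT : IsCompact T) (p : ℤ) (κ : ℝ)
    (p' : ℤ) (δ : ℝ) : MeasurableSet (resonantSet U N T p κ p' δ) :=
  (isClosed_resonantSet U N hT p κ p' δ).measurableSet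

lemma volume_le_of_expanding {B T : Set ℝ} {F : ℝ → ℝ} {κ : ℝ} (hκ : 0 < κ)
    (hF : Set.MapsTo F B T) (h : ∀ v ∈ B, ∀ v' ∈ B, κ ^ 2 * |v - v'| ≤ |F v - F v'|) :
    volume B ≤ ENNReal.ofReal (κ ^ 2)⁻¹ * volume T := by
  set K : NNReal := Real.toNNReal (κ ^ 2)⁻¹
  have hA : AntilipschitzWith K fun v : B => F v := by
    refine AntilipschitzWith.of_le_mul_dist fun v v' => ?_
    rw [Real.coe_toNNReal _ (by positivity), Subtype.dist_eq, Real.dist_eq, Real.dist_eq,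
      inv_mul_eq_div, le_div_iff₀ (by positivity), mul_comm]
    exact h _ v.2 _ v'.2
  have h1 := hA.le_hausdorffMeasure_image zero_le_one Set.univ
  have h2 := (isometry_subtype_coe (s := B)).hausdorffMeasure_image (d := 1)
    (Or.inl zero_le_one) Set.univ
  rw [Set.image_univ, Subtype.range_coe] at h2
  rw [← h2, hausdorffMeasure_real, ENNReal.rpow_one] at h1
  refine h1.trans ?_
  gcongr
  · exact le_rfl
  · rintro _ ⟨v, _, rfl⟩
    exact hF v.2

lemma volume_resonant_slice_le (U : ℤ → ℝ) (N : ℕ) (T : Set ℝ) {p : ℤ} (hp : p ∈ latticeBox N)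
    {κ : ℝ} (hκ : 0 < κ) :
    volume {v | ∃ E ∈ T, ∃ φ, IsBoxEigenvector (Function.update U p v) N E φ ∧ κ ≤ |φ p|}
      ≤ ENNReal.ofReal (κ ^ 2)⁻¹ * volume T := by
  set B := {v | ∃ E ∈ T, ∃ φ, IsBoxEigenvector (Function.update U p v) N E φ ∧ κ ≤ |φ p|}
  have hB : ∀ v, ∃ E, v ∈ B → E ∈ T ∧
      ∃ φ, IsBoxEigenvector (Function.update U p v) N E φ ∧ κ ≤ |φ p| := fun v => by
    by_cases hv : v ∈ B
    · obtain ⟨E, hE, h⟩ := hv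
      exact ⟨E, fun _ => ⟨hE, h⟩⟩
    · exact ⟨0, fun h => absurd h hv⟩
  choose F hF using hB
  refine volume_le_of_expanding hκ (F := F) (fun v hv => (hF v hv).1) fun v hv v' hv' => ?_
  obtain ⟨-, φ, hφ, h1⟩ := hF v hv
  obtain ⟨-, φ', hφ', h1'⟩ := hF v' hv'
  have h := hφ'.overlap hφ.eqn
  have hsum : ∑ n ∈ latticeBox N, (Function.update U p v n - Function.update U p v' n)
      * (φ' n * φ n) = (v - v') * (φ' p * φ p) := by
    rw [Finset.sum_eq_single_of_mem p hp (fun n _ hn => by simp [Function.update_of_ne hn])]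
    simp
  rw [hφ.zero (N + 1) (by simp), hφ.zero (-N - 1) (by simp), hsum, mul_zero, mul_zero, add_zero,
    zero_add] at h
  have hS : |∑ n ∈ latticeBox N, φ' n * φ n| ≤ 1 := by
    have := Finset.sum_mul_sq_le_sq_mul_sq (latticeBox N) φ' φ
    rw [hφ.norm, hφ'.norm, one_mul] at this
    exact (sq_le_one_iff_abs_le_one _).1 this
  have hle : κ ^ 2 ≤ |φ' p| * |φ p| := by
    rw [sq]; exact mul_le_mul h1' h1 hκ.le (abs_nonneg _)
  calc κ ^ 2 * |v - v'| ≤ |φ' p| * |φ p| * |v - v'| := by gcongr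
    _ = |(F v - F v') * ∑ n ∈ latticeBox N, φ' n * φ n| := by
      rw [h, abs_mul, abs_mul]; ring
    _ ≤ |F v - F v'| * 1 := by rw [abs_mul]; gcongr
    _ = _ := mul_one _

/-- The product of `n` transfer matrices with effective energies `b j`, applied to `z`; the matrix
with index `0` acts last. -/
def transferVec (b : ℕ → ℝ) : ℕ → ℝ × ℝ → ℝ × ℝ
  | 0, z => z
  | n + 1, z => transferVec b n (b n * z.1 - z.2, z.1)

lemma transferVec_smul (b : ℕ → ℝ) (n : ℕ) (c : ℝ) (z : ℝ × ℝ) :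
    transferVec b n (c • z) = c • transferVec b n z := by
  induction n generalizing z with
  | zero => rfl
  | succ n ih =>
    simp only [transferVec]
    rw [← ih]
    congr 1
    ext <;> simp; ring

lemma transferVec_congr {b b' : ℕ → ℝ} {n : ℕ} (h : ∀ j < n, b j = b' j) (z : ℝ × ℝ) :
    transferVec b n z = transferVec b' n z := by
  induction n generalizing z with
  | zero => rfl
  | succ n ih => rw [transferVec, transferVec, h n n.lt_succ_self, ih fun j hj => h j (by omega)]

lemma continuous_transferVec {α : Type*} [TopologicalSpace α] {b : α → ℕ → ℝ} {z : α → ℝ × ℝ}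
    (hb : Continuous b) (hz : Continuous z) (n : ℕ) :
    Continuous fun a => transferVec (b a) n (z a) := by
  induction n generalizing z with
  | zero => exact hz
  | succ n ih => exact ih (z := fun a => (b a n * (z a).1 - (z a).2, (z a).1)) (by fun_prop)

lemma transferVec_eq_of_eqn {φ : ℤ → ℝ} {b : ℕ → ℝ} {p σ : ℤ} {n : ℕ}
    (h : ∀ j : ℕ, j < n →
      φ (p + σ * (j + 2)) + φ (p + σ * j) = b j * φ (p + σ * (j + 1))) :
    transferVec b n (φ (p + σ * n), φ (p + σ * (n + 1))) = (φ p, φ (p + σ)) := by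
  induction n with
  | zero => simp [transferVec]
  | succ n ih =>
    rw [transferVec, ← ih fun j hj => h j (by omega)]
    have := h n n.lt_succ_self
    congr 1
    ext
    · push_cast
      rw [show (n : ℤ) + 1 + 1 = n + 2 by ring]
      linarith
    · push_cast; rfl

lemma lmarginal_transferVec {ε : ℝ} (hε : 0 < ε) (b : ℕ → ℝ) {s : ℕ → ℤ}
    (hs : Function.Injective s) (n : ℕ) (z : ℝ × ℝ) (x : ℤ → ℝ) :
    lmarginal (fun _ => uniformOn ε) ((Finset.range n).image s)
      (fun w => ‖transferVec (fun j => b j - w (s j)) n z‖ₑ⁻¹) x = meanInvNorm ε b n z := by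
  have := isProbabilityMeasure_uniformOn hε
  induction n generalizing z x with
  | zero => simp [transferVec, meanInvNorm]
  | succ n ih =>
    have hni : s n ∉ (Finset.range n).image s := by simp [hs.eq_iff]
    rw [Finset.range_add_one, Finset.image_insert, lmarginal_insert _ _ hni, meanInvNorm]
    · refine lintegral_congr fun v => ?_
      rw [← ih _ (Function.update x (s n) v)]
      unfold lmarginal
      refine lintegral_congr fun y => ?_
      simp only [transferVec]
      simp [Function.updateFinset, hni]
    · exact (continuous_transferVec (by fun_prop) continuous_const _).measurable.enorm.inv

lemma lmarginal_le_of_slice {ε : ℝ} (hε : 0 < ε) {S : Finset ℤ} {p : ℤ} (hp : p ∈ S)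
    {f g : (ℤ → ℝ) → ℝ≥0∞} (hf : Measurable f)
    (h : ∀ w, ∫⁻ v, f (Function.update w p v) ∂uniformOn ε ≤ g w) (x : ℤ → ℝ) :
    lmarginal (fun _ => uniformOn ε) S f x
      ≤ lmarginal (fun _ => uniformOn ε) (S.erase p) g x := by
  have := isProbabilityMeasure_uniformOn hε
  rw [lmarginal_erase' _ hf hp]
  exact lmarginal_mono h x

lemma lmarginal_const_uniformOn {ε : ℝ} (hε : 0 < ε) (S : Finset ℤ) (c : ℝ≥0∞) (x : ℤ → ℝ) :
    lmarginal (fun _ => uniformOn ε) S (fun _ => c) x = c := by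
  have := isProbabilityMeasure_uniformOn hε
  simp [lmarginal]

lemma lintegral_resonantSet_slice_le (ε : ℝ) (U : ℤ → ℝ) (N : ℕ) {T : Set ℝ} (hT : IsCompact T)
    {p : ℤ} (hp : p ∈ latticeBox N) {κ : ℝ} (hκ : 0 < κ) {p' : ℤ} {δ : ℝ} (w : ℤ → ℝ) {T' : Set ℝ}
    (h : ∀ v, ∀ E ∈ T, ∀ φ, IsBoxEigenvector (fun n => U n + Function.update w p v n) N E φ →
      δ ≤ |φ p'| → E ∈ T') :
    ∫⁻ v, (resonantSet U N T p κ p' δ).indicator (fun _ => 1) (Function.update w p v)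
        ∂uniformOn ε
      ≤ (ENNReal.ofReal (2 * ε))⁻¹ * (ENNReal.ofReal (κ ^ 2)⁻¹ * volume T') := by
  set A := {v | Function.update w p v ∈ resonantSet U N T p κ p' δ}
  have hA : MeasurableSet A := (measurableSet_resonantSet U N hT p κ p' δ).preimage
    (measurable_update w)
  have h1 : ∫⁻ v, (resonantSet U N T p κ p' δ).indicator (fun _ => 1) (Function.update w p v)
      ∂uniformOn ε = uniformOn ε A := by
    rw [← lintegral_indicator_one hA]
    rfl
  rw [h1]
  refine (uniformOn_le ε A).trans ?_
  rw [Measure.smul_apply, smul_eq_mul]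
  gcongr
  have hsub : A ⊆ (U p + ·) ⁻¹' {v | ∃ E ∈ T', ∃ φ,
      IsBoxEigenvector (Function.update (fun n => U n + w n) p v) N E φ ∧ κ ≤ |φ p|} := by
    rintro v ⟨E, hE, φ, hφ, h1, h2⟩
    refine ⟨E, h v E hE φ hφ h2, φ, hφ.congr fun n _ => ?_, h1⟩
    by_cases hn : n = p
    · subst hn; simp
    · simp [hn]
  refine (measure_mono hsub).trans ?_
  rw [measure_preimage_add]
  exact volume_resonant_slice_le _ N T' hp hκ

lemma lmarginal_resonantSet_le {ε : ℝ} (hε : 0 < ε) (U : ℤ → ℝ) {N : ℕ} {T : Set ℝ}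
    (hT : IsCompact T) {S : Finset ℤ} {p : ℤ} (hp : p ∈ latticeBox N) (hpS : p ∈ S) {κ : ℝ}
    (hκ : 0 < κ) (p' : ℤ) (δ : ℝ) (x : ℤ → ℝ) :
    lmarginal (fun _ => uniformOn ε) S ((resonantSet U N T p κ p' δ).indicator fun _ => 1) x
      ≤ (ENNReal.ofReal (2 * ε))⁻¹ * (ENNReal.ofReal (κ ^ 2)⁻¹ * volume T) := by
  refine (lmarginal_le_of_slice hε hpS
    (measurable_const.indicator (measurableSet_resonantSet U N hT p κ p' δ))
    (fun w => lintegral_resonantSet_slice_le ε U N hT hp hκ w fun v E hE _ _ _ => hE) x).trans ?_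
  rw [lmarginal_const_uniformOn hε]

lemma lmarginal_inv_transferVec_le {ε : ℝ} (hε : 0 < ε) (hε1 : ε ≤ 1) (b : ℕ → ℝ) {s : ℕ → ℤ}
    (hs : Function.Injective s) (n : ℕ) {S : Finset ℤ}
    (hS : (Finset.range (n + 1)).image s ⊆ S) (x : ℤ → ℝ) :
    lmarginal (fun _ => uniformOn ε) S
        (fun w => ‖transferVec (fun j => b j - w (s j)) (n + 1) (1, 0)‖ₑ⁻¹) x
      ≤ ENNReal.ofReal (√(4 / ε * (1 - ε ^ 4 / 14400) ^ (n / 2))) := by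
  have := isProbabilityMeasure_uniformOn hε
  have hε4 : ε ^ 4 ≤ 1 := pow_le_one₀ hε.le hε1
  have hρ : 0 ≤ 4 / ε * (1 - ε ^ 4 / 14400) ^ (n / 2) :=
    mul_nonneg (by positivity) (pow_nonneg (by linarith) _)
  rw [← Finset.sdiff_union_of_subset hS, lmarginal_union _ _ _ Finset.sdiff_disjoint,
    funext (lmarginal_transferVec hε b hs (n + 1) (1, 0)), lmarginal_const_uniformOn hε]
  · have h := sq_meanInvNorm_le hε hε1 b n
    rw [← Real.sq_sqrt hρ, ENNReal.ofReal_pow (Real.sqrt_nonneg _)] at h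
    exact (ENNReal.pow_le_pow_left_iff two_ne_zero).1 h
  · exact (continuous_transferVec (by fun_prop) continuous_const _).measurable.enorm.inv

lemma lmarginal_lintegral_swap {ε : ℝ} (hε : 0 < ε) (S : Finset ℤ) (T : Set ℝ)
    {F : ℝ → (ℤ → ℝ) → ℝ≥0∞} (hF : Measurable (Function.uncurry F)) (x : ℤ → ℝ) :
    lmarginal (fun _ => uniformOn ε) S (fun w => ∫⁻ E in T, F E w) x
      = ∫⁻ E in T, lmarginal (fun _ => uniformOn ε) S (F E) x := by
  have := isProbabilityMeasure_uniformOn hε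
  unfold lmarginal
  refine lintegral_lintegral_swap (Measurable.aemeasurable ?_)
  exact hF.comp (measurable_snd.prodMk (measurable_updateFinset.comp measurable_fst))

lemma IsBoxEigenvector.abs_mul_norm_transferVec_le_one {U : ℤ → ℝ} {N : ℕ} {E : ℝ} {φ : ℤ → ℝ}
    (hφ : IsBoxEigenvector U N E φ) {p σ : ℤ} (hσ : σ = 1 ∨ σ = -1) {n : ℕ}
    (hp : p + σ * (n + 1) = σ * N) (hn : n < N) :
    |φ (σ * N)| * ‖transferVec (fun j => E - U (p + σ * (j + 1))) (n + 1) (1, 0)‖ ≤ 1 := by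
  have h := transferVec_eq_of_eqn (φ := φ) (b := fun j => E - U (p + σ * (j + 1))) (p := p)
    (σ := σ) (n := n + 1) fun j hj => by
      have h1 := hφ.eqn (p + σ * (j + 1)) (by
        rcases hσ with rfl | rfl <;> simp only [Finset.mem_Icc] <;> omega)
      rcases hσ with rfl | rfl
      · rw [show p + 1 * ((j : ℤ) + 2) = p + 1 * (j + 1) + 1 by ring,
          show p + 1 * (j : ℤ) = p + 1 * (j + 1) - 1 by ring]
        linarith
      · rw [show p + -1 * ((j : ℤ) + 2) = p + -1 * (j + 1) - 1 by ring,
          show p + -1 * (j : ℤ) = p + -1 * (j + 1) + 1 by ring]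
        linarith
  have hz : φ (p + σ * ((n + 1 : ℕ) + 1)) = 0 := hφ.zero _ (by
    rcases hσ with rfl | rfl <;> simp only [Finset.mem_Icc] <;> push_cast <;> omega)
  have hb : p + σ * ((n + 1 : ℕ) : ℤ) = σ * N := by push_cast; exact hp
  have hc : ((φ (σ * N), 0) : ℝ × ℝ) = φ (σ * N) • ((1, 0) : ℝ × ℝ) := by simp
  rw [hz, hb, hc, transferVec_smul] at h
  rw [← Real.norm_eq_abs, ← norm_smul, h, Prod.norm_mk]
  exact max_le (hφ.abs_le_one _) (hφ.abs_le_one _)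

/-- An eigenvector large at both `p` and the boundary site `p + σ (n + 1)` is unlikely. -/
lemma lmarginal_resonantSet_boundary_le {ε : ℝ} (hε : 0 < ε) (hε1 : ε ≤ 1) (U : ℤ → ℝ) {N : ℕ}
    {T : Set ℝ} (hT : IsCompact T) {S : Finset ℤ} {p σ : ℤ} (hσ : σ = 1 ∨ σ = -1) {n : ℕ}
    (hp : p + σ * (n + 1) = σ * N) (hn : n < N)
    (hS : ∀ j : ℕ, j ≤ n + 1 → p + σ * j ∈ S) {κ δ : ℝ} (hκ : 0 < κ) (hδ : 0 < δ) (x : ℤ → ℝ) :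
    lmarginal (fun _ => uniformOn ε) S
        ((resonantSet U N T p κ (σ * N) δ).indicator fun _ => 1) x
      ≤ (ENNReal.ofReal (2 * ε))⁻¹ * (ENNReal.ofReal (κ ^ 2)⁻¹ * (ENNReal.ofReal δ⁻¹ *
        (ENNReal.ofReal (√(4 / ε * (1 - ε ^ 4 / 14400) ^ (n / 2))) * volume T))) := by
  have := isProbabilityMeasure_uniformOn hε
  set s : ℕ → ℤ := fun j => p + σ * (j + 1) with hs
  have hbox : ∀ j : ℕ, j ≤ n + 1 → p + σ * j ∈ latticeBox N := by
    intro j hj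
    rcases hσ with rfl | rfl <;> simp only [Finset.mem_Icc] <;> omega
  have hsi : Function.Injective s := by
    intro i j hij
    rcases hσ with rfl | rfl <;> simp only [hs] at hij <;> omega
  have hsS : (Finset.range (n + 1)).image s ⊆ S.erase p := by
    intro q hq
    obtain ⟨j, hj, rfl⟩ := Finset.mem_image.1 hq
    rw [Finset.mem_range] at hj
    refine Finset.mem_erase.2 ⟨?_, by simpa [hs] using hS (j + 1) (by omega)⟩
    rcases hσ with rfl | rfl <;> simp only [hs] <;> omega
  set F : ℝ → (ℤ → ℝ) → ℝ≥0∞ := fun E w =>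
    ‖transferVec (fun j => (E - U (s j)) - w (s j)) (n + 1) (1, 0)‖ₑ⁻¹ with hF
  have hFm : Measurable (Function.uncurry F) :=
    (continuous_transferVec (α := ℝ × (ℤ → ℝ)) (b := fun a j => (a.1 - U (s j)) - a.2 (s j))
      (by fun_prop) continuous_const (n + 1)).measurable.enorm.inv
  have hslice : ∀ w, ∫⁻ v, (resonantSet U N T p κ (σ * N) δ).indicator (fun _ => 1)
      (Function.update w p v) ∂uniformOn ε ≤ (ENNReal.ofReal (2 * ε))⁻¹ *
        (ENNReal.ofReal (κ ^ 2)⁻¹ * (ENNReal.ofReal δ⁻¹ * ∫⁻ E in T, F E w)) := by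
    intro w
    have hFw : Measurable fun E => F E w := hFm.of_uncurry_right
    have hp0 : p ∈ latticeBox N := by simpa using hbox 0 (by omega)
    set T' : Set ℝ := T ∩ {E | ENNReal.ofReal δ ≤ F E w}
    refine (lintegral_resonantSet_slice_le ε U N hT hp0 hκ w (T' := T') ?_).trans ?_
    · intro v E hE φ hφ hδφ
      refine ⟨hE, ?_⟩
      have hs_ne : ∀ j : ℕ, j < n + 1 → s j ≠ p := fun j hj => (Finset.mem_erase.1 (hsS
        (Finset.mem_image_of_mem s (Finset.mem_range.2 hj)))).1
      have hn1 : |φ (σ * N)| * ‖transferVec (fun j => (E - U (s j)) - w (s j)) (n + 1) (1, 0)‖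
          ≤ 1 := by
        rw [← transferVec_congr (b := fun j => E - (U (s j) + Function.update w p v (s j)))
          fun j hj => by rw [Function.update_of_ne (hs_ne j hj)]; ring]
        exact hφ.abs_mul_norm_transferVec_le_one hσ hp hn
      change _ ≤ ‖_‖ₑ⁻¹
      rw [ENNReal.le_inv_iff_mul_le, ← ofReal_norm, ← ENNReal.ofReal_mul hδ.le,
        ENNReal.ofReal_le_one]
      exact (mul_le_mul_of_nonneg_right hδφ (norm_nonneg _)).trans hn1
    · gcongr
      rw [show T' = {E | ENNReal.ofReal δ ≤ F E w} ∩ T from Set.inter_comm _ _,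
        ← Measure.restrict_apply (measurableSet_le measurable_const hFw),
        ENNReal.ofReal_inv_of_pos hδ, mul_comm, ← div_eq_mul_inv]
      exact meas_ge_le_lintegral_div hFw.aemeasurable (by simpa using hδ) ENNReal.ofReal_ne_top
  refine (lmarginal_le_of_slice hε (p := p) (by simpa using hS 0 (by omega))
    (measurable_const.indicator (measurableSet_resonantSet U N hT p κ _ δ)) hslice x).trans ?_
  have hFi : Measurable fun w => ∫⁻ E in T, F E w :=
    Measurable.lintegral_prod_left' (f := fun a : ℝ × (ℤ → ℝ) => F a.1 a.2) hFm
  unfold lmarginal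
  have hu : Measurable (Function.updateFinset x (S.erase p)) := measurable_updateFinset
  rw [lintegral_const_mul _ (by fun_prop), lintegral_const_mul _ (by fun_prop),
    lintegral_const_mul _ (by fun_prop)]
  gcongr
  change lmarginal (fun _ => uniformOn ε) (S.erase p) (fun w => ∫⁻ E in T, F E w) x ≤ _
  rw [lmarginal_lintegral_swap hε _ _ hFm]
  calc _ ≤ ∫⁻ E in T, ENNReal.ofReal (√(4 / ε * (1 - ε ^ 4 / 14400) ^ (n / 2))) :=
        lintegral_mono fun E => lmarginal_inv_transferVec_le hε hε1 _ hsi n hsS x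
    _ = _ := by rw [setLIntegral_const]

lemma exists_notMem_of_sum_lmarginal_lt_one {ε : ℝ} (hε : 0 < ε) (S : Finset ℤ) {ι : Type*}
    (I : Finset ι) (B : ι → Set (ℤ → ℝ)) (hB : ∀ i ∈ I, MeasurableSet (B i))
    (h : ∑ i ∈ I,
      lmarginal (fun _ => uniformOn ε) S ((B i).indicator fun _ => 1) (fun _ => 0) < 1) :
    ∃ w : ℤ → ℝ, (∀ n, |w n| ≤ ε) ∧ (∀ n ∉ S, w n = 0) ∧ ∀ i ∈ I, w ∉ B i := by
  have := isProbabilityMeasure_uniformOn hε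
  set μ := Measure.pi fun _ : S => uniformOn ε
  set u : (S → ℝ) → ℤ → ℝ := Function.updateFinset (fun _ => (0 : ℝ)) S
  have hu : Measurable u := measurable_updateFinset
  have hlt : μ (⋃ i ∈ I, u ⁻¹' B i) < 1 := by
    refine (measure_biUnion_finset_le _ _).trans_lt (lt_of_le_of_lt (Finset.sum_le_sum ?_) h)
    intro i hi
    rw [← lintegral_indicator_one (hu (hB i hi))]
    exact le_rfl
  have hae : ∀ᵐ y ∂μ, ∀ i, y i ∈ Set.Icc (-ε) ε := ae_all_iff.2 fun i =>
    (Measure.quasiMeasurePreserving_eval (fun _ : S => uniformOn ε) i).ae (ae_uniformOn_mem ε)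
  by_contra hcon
  push Not at hcon
  refine hlt.ne ?_
  rw [← prob_compl_eq_zero_iff (Finset.measurableSet_biUnion _ fun i hi => hu (hB i hi))]
  refine measure_mono_null (fun y hy => ?_) hae
  intro hcube
  have h1 : ∀ n, |u y n| ≤ ε := fun n => by
    by_cases hn : n ∈ S
    · simpa [u, Function.updateFinset, hn] using abs_le.2 (hcube ⟨n, hn⟩)
    · simpa [u, Function.updateFinset, hn] using hε.le
  have h2 : ∀ n ∉ S, u y n = 0 := fun n hn => by simp [u, Function.updateFinset, hn]
  obtain ⟨i, hi, hib⟩ := hcon (u y) h1 h2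
  exact hy (Set.mem_biUnion hi hib)

lemma IsBoxEigenbasis.exists_energy_eq {U : ℤ → ℝ} {N : ℕ} {e : latticeBox N → ℝ}
    {φ : latticeBox N → ℤ → ℝ} (h : IsBoxEigenbasis U N e φ) {E : ℝ} {ψ : ℤ → ℝ}
    (hψ : IsBoxEigenvector U N E ψ) : ∃ j, E = e j := by
  by_contra hcon
  push Not at hcon
  have hz : ∀ j, ∑ n ∈ latticeBox N, ψ n * φ j n = 0 := fun j => by
    have h1 := hψ.overlap (h.eig j).eqn
    rw [(h.eig j).zero (N + 1) (by simp), (h.eig j).zero (-N - 1) (by simp)] at h1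
    simp only [sub_self, zero_mul, mul_zero, Finset.sum_const_zero, add_zero] at h1
    exact (mul_eq_zero.1 h1).resolve_left (sub_ne_zero.2 (hcon j).symm)
  have h2 := h.parseval ψ ψ
  simp only [hz, mul_zero, Finset.sum_const_zero] at h2
  have h3 := hψ.norm
  simp only [sq] at h3
  linarith

lemma IsBoxEigenvector.exists_boundary_ge {U : ℤ → ℝ} {N N' : ℕ} {E M κ : ℝ} {φ : ℤ → ℝ}
    (hφ : IsBoxEigenvector U N' E φ) (hU : ∀ n, |U n| ≤ M) (hN : N + 2 ≤ N') (hκ : 0 < κ)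
    {n : ℤ} (hn : n ∈ latticeBox N) (h : κ * (2 * M + 4) ^ (2 * N + 1) < |φ n|) {σ : ℤ}
    (hσ : σ = 1 ∨ σ = -1) : ∃ k : ℕ, (k = 1 ∨ k = 2) ∧ κ ≤ |φ (σ * (N + k))| := by
  rcases hσ with rfl | rfl
  · rcases hφ.exists_right_ge hU hN hκ hn h with h | h
    · exact ⟨1, Or.inl rfl, by simpa using h⟩
    · exact ⟨2, Or.inr rfl, by simpa using h⟩
  · rcases hφ.reflect.exists_right_ge (fun n => hU (-n)) hN hκ (n := -n)
      (by simp only [Finset.mem_Icc] at hn ⊢; omega) (by simpa using h) with h | h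
    · exact ⟨1, Or.inl rfl, by simpa using h⟩
    · exact ⟨2, Or.inr rfl, by simpa using h⟩

/-- Bound for the probability of an eigenvector of size `κ` near the inner box and of size `δ` at
the boundary of the outer box. -/
def boundaryBound (ε M κ δ : ℝ) (m : ℕ) : ℝ :=
  (2 * ε)⁻¹ * ((κ ^ 2)⁻¹ * (δ⁻¹ * (√(4 / ε * (1 - ε ^ 4 / 14400) ^ (m / 2)) * (2 * (M + 2)))))

lemma exists_isNonresonant {ε M h κ₁ κ₂ δ : ℝ} {N N' : ℕ} {U : ℤ → ℝ} (hε : 0 < ε) (hε1 : ε ≤ 1)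
    (hU : ∀ n, |U n| ≤ M - 1) (hN : N + 3 ≤ N') (hh : 0 < h) (hκ₁ : 0 < κ₁) (hκ₂ : 0 < κ₂)
    (hδ : 0 < δ)
    (hprob : ((2 * N + 1) * (2 * N' + 1) : ℝ) * (2 * h / (ε * κ₁ ^ 2))
      + 4 * boundaryBound ε M (κ₂ / (2 * (2 * M + 4) ^ (2 * N + 1))) δ (N' - N - 3) < 1) :
    ∃ w : ℤ → ℝ, (∀ n, |w n| ≤ ε) ∧ (∀ n ∉ latticeBox N', w n = 0) ∧
      IsNonresonant U (fun n => U n + w n) N N' h κ₁ κ₂ δ := by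
  have hM : 0 ≤ M := by linarith [(abs_nonneg _).trans (hU 0)]
  obtain ⟨e, φ₀, hb⟩ := exists_isBoxEigenbasis U N
  set κ := κ₂ / (2 * (2 * M + 4) ^ (2 * N + 1)) with hκdef
  have hκ : 0 < κ := by positivity
  have hκlt : κ * (2 * M + 4) ^ (2 * N + 1) < κ₂ := by
    rw [hκdef]; field_simp; linarith
  have hε4 : ε ^ 4 ≤ 1 := pow_le_one₀ hε.le hε1
  have hρ0 : 0 ≤ 1 - ε ^ 4 / 14400 := by linarith
  have hρ1 : 1 - ε ^ 4 / 14400 ≤ 1 := by linarith [pow_pos hε 4]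
  set S := latticeBox N' \ latticeBox N with hS
  set B : (latticeBox N × ℤ) ⊕ (ℤ × ℕ) → Set (ℤ → ℝ) := Sum.elim
    (fun a => resonantSet U N' (Set.Icc (e a.1 - 2 * h) (e a.1 + 2 * h)) a.2 κ₁ 0 0)
    (fun a => resonantSet U N' (Set.Icc (-(M + 2)) (M + 2)) (a.1 * (N + a.2)) κ (a.1 * N') δ)
    with hBdef
  set I := (Finset.univ ×ˢ S : Finset (latticeBox N × ℤ)).disjSum
    (({1, -1} : Finset ℤ) ×ˢ ({1, 2} : Finset ℕ)) with hI
  obtain ⟨w, hwε, hw0, hwB⟩ := exists_notMem_of_sum_lmarginal_lt_one hε S I B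
    (by
      rintro (a | a) -
      · exact measurableSet_resonantSet _ _ isCompact_Icc _ _ _ _
      · exact measurableSet_resonantSet _ _ isCompact_Icc _ _ _ _)
    (by
      have hb1 : ∀ a ∈ (Finset.univ ×ˢ S : Finset (latticeBox N × ℤ)),
          lmarginal (fun _ => uniformOn ε) S ((B (Sum.inl a)).indicator fun _ => 1) (fun _ => 0)
            ≤ ENNReal.ofReal (2 * h / (ε * κ₁ ^ 2)) := by
        intro a ha
        have ha2 := (Finset.mem_product.1 ha).2
        refine (lmarginal_resonantSet_le hε U isCompact_Icc (Finset.mem_sdiff.1 ha2).1 ha2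
          hκ₁ _ _ _).trans_eq ?_
        rw [Real.volume_Icc, ← ENNReal.ofReal_inv_of_pos (by positivity),
          ← ENNReal.ofReal_mul (by positivity), ← ENNReal.ofReal_mul (by positivity)]
        congr 1
        field_simp
        ring
      have hb2 : ∀ a ∈ ({1, -1} : Finset ℤ) ×ˢ ({1, 2} : Finset ℕ),
          lmarginal (fun _ => uniformOn ε) S ((B (Sum.inr a)).indicator fun _ => 1) (fun _ => 0)
            ≤ ENNReal.ofReal (boundaryBound ε M κ δ (N' - N - 3)) := by
        rintro ⟨σ, k⟩ ha
        obtain ⟨hσ, hk⟩ := Finset.mem_product.1 ha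
        simp only [Finset.mem_insert, Finset.mem_singleton] at hσ hk
        refine (lmarginal_resonantSet_boundary_le hε hε1 U isCompact_Icc hσ
          (n := N' - N - k - 1) (by
            push_cast [show k ≤ N' - N by omega, show 1 ≤ N' - N - k by omega,
              show N ≤ N' by omega]
            ring) (by omega) (fun j hj => by
              simp only [hS, Finset.mem_sdiff, Finset.mem_Icc]
              rcases hσ with rfl | rfl <;> omega) hκ hδ _).trans ?_
        rw [Real.volume_Icc, ← ENNReal.ofReal_inv_of_pos (by positivity),
          ← ENNReal.ofReal_mul (by positivity), ← ENNReal.ofReal_mul (by positivity),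
          ← ENNReal.ofReal_mul (by positivity), ← ENNReal.ofReal_mul (by positivity)]
        refine ENNReal.ofReal_le_ofReal ?_
        rw [boundaryBound, show M + 2 - -(M + 2) = 2 * (M + 2) by ring]
        gcongr _ * (_ * (_ * (√(_ * ?_) * _)))
        exact pow_le_pow_of_le_one hρ0 hρ1 (by omega)
      rw [hI, Finset.sum_disjSum]
      have hc1 : (Finset.univ ×ˢ S : Finset (latticeBox N × ℤ)).card
          ≤ (2 * N + 1) * (2 * N' + 1) := by
        rw [Finset.card_product, Finset.card_univ, Fintype.card_coe, card_latticeBox]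
        gcongr
        rw [← card_latticeBox]
        exact Finset.card_le_card Finset.sdiff_subset
      have hbb : 0 ≤ boundaryBound ε M κ δ (N' - N - 3) := by unfold boundaryBound; positivity
      calc _ ≤ ((2 * N + 1) * (2 * N' + 1)) • ENNReal.ofReal (2 * h / (ε * κ₁ ^ 2))
            + 4 • ENNReal.ofReal (boundaryBound ε M κ δ (N' - N - 3)) := by
              refine add_le_add ((Finset.sum_le_card_nsmul _ _ _ hb1).trans ?_)
                (Finset.sum_le_card_nsmul _ _ _ hb2)
              gcongr
        _ = ENNReal.ofReal (((2 * N + 1) * (2 * N' + 1) : ℝ) * (2 * h / (ε * κ₁ ^ 2))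
              + 4 * boundaryBound ε M κ δ (N' - N - 3)) := by
              rw [ENNReal.ofReal_add (by positivity) (by positivity), ← ENNReal.ofReal_nsmul,
                ← ENNReal.ofReal_nsmul]
              simp [nsmul_eq_mul]
        _ < 1 := by
              rw [← ENNReal.ofReal_one]
              exact (ENNReal.ofReal_lt_ofReal_iff one_pos).2 hprob)
  have hUw : ∀ n, |U n + w n| ≤ M := fun n => by
    linarith [abs_add_le (U n) (w n), hU n, hwε n]
  refine ⟨w, hwε, fun n hn => hw0 n fun h => hn (Finset.mem_sdiff.1 h).1, ?_, ?_, ?_⟩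
  · intro n hn
    rw [hw0 n fun h => (Finset.mem_sdiff.1 h).2 hn, add_zero]
  · intro E₀ ψ E φ hψ hφ hE q hq
    obtain ⟨i, rfl⟩ := hb.exists_energy_eq hψ
    by_contra hcon
    push Not at hcon
    refine hwB (Sum.inl (i, q)) (Finset.inl_mem_disjSum.2
      (Finset.mem_product.2 ⟨Finset.mem_univ _, hq⟩)) ⟨E, ?_, φ, hφ, hcon.le, abs_nonneg _⟩
    have := abs_le.1 hE
    constructor <;> simp only <;> linarith
  · intro E φ hφ n hn hκφ
    have hside : ∀ σ : ℤ, σ = 1 ∨ σ = -1 → |φ (σ * N')| ≤ δ := fun σ hσ => by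
      by_contra hcon
      push Not at hcon
      obtain ⟨k, hk, hκk⟩ := hφ.exists_boundary_ge hUw (by omega) hκ hn (hκlt.trans_le hκφ) hσ
      refine hwB (Sum.inr (σ, k)) ?_ ⟨E, ?_, φ, hφ, hκk, hcon.le⟩
      · rw [hI, Finset.inr_mem_disjSum]
        simp [hσ, hk]
      · exact abs_le.1 (hφ.abs_energy_le hUw)
    exact ⟨by simpa using hside 1 (Or.inl rfl), by simpa using hside (-1) (Or.inr rfl)⟩

open Filter in
lemma tendsto_const_mul_pow_mul_exp (C : ℝ) (k : ℕ) {c : ℝ} (hc : 0 < c) :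
    Tendsto (fun x : ℕ => C * (x : ℝ) ^ k * Real.exp (-(c * x))) atTop (nhds 0) := by
  have h1 : Tendsto (fun x : ℕ => c * (x : ℝ)) atTop atTop :=
    (tendsto_natCast_atTop_atTop (R := ℝ)).const_mul_atTop hc
  have h := ((Real.tendsto_pow_mul_exp_neg_atTop_nhds_zero k).comp h1).const_mul (C / c ^ k)
  rw [mul_zero] at h
  refine h.congr fun x => ?_
  simp only [Function.comp, mul_pow]
  field_simp

lemma eventually_const_mul_pow_mul_exp_lt (C : ℝ) (k : ℕ) {c : ℝ} (hc : 0 < c) {r : ℝ}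
    (hr : 0 < r) : ∀ᶠ x : ℕ in Filter.atTop, C * (x : ℝ) ^ k * Real.exp (-(c * x)) < r :=
  (tendsto_const_mul_pow_mul_exp C k hc).eventually_lt_const hr

/-- The numerical inequalities needed at length scale `x`, with inner box of size `x ^ 6` and outer
box of size `(x ^ 6) ^ 6`. -/
structure ScaleBounds (M Λ : ℝ) (x : ℕ) : Prop where
  two_le : 2 ≤ x
  shell : (2 * ((x ^ 6) ^ 6 : ℕ) + 1) * Real.exp (-(Λ / 8 * x)) ^ 2 ≤ 1 / 4
  core : (2 * (x ^ 6 : ℕ) + 1) * Real.exp (-((x ^ 6 : ℕ) : ℝ)) ^ 2 ≤ 3 / 4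
  gap_le : Real.exp (-(Λ / 16 * (x ^ 6 : ℕ))) ≤ Real.exp (-(Λ / 2 * x))
  gap_mul_le : Real.exp (-(Λ / 16 * (x ^ 6 : ℕ)))
    * (4 * (2 * M + 4) ^ (2 * x ^ 6) * (2 * (x ^ 6 : ℕ) + 1)) ≤ 1
  edge : 2 * Real.exp (-(Λ * x)) ^ 2 < Real.exp (-(Λ / 2 * x)) ^ 2
  window : Real.exp (-(Λ / 2 * x)) ≤ Real.exp (-(Λ / 16 * x)) / 2
  step : 2 * (8 * Real.exp (-(Λ / 8 * x)) ^ 2 / Real.exp (-(Λ / 16 * x)) ^ 2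
    + (2 * ((x ^ 6) ^ 6 : ℕ) + 1) * Real.exp (-(Λ / 8 * x)) ^ 2) ≤ Real.exp (-(Λ / 32 * x)) ^ 2
  halving : Real.exp (-(Λ / 32 * (x ^ 6 : ℕ))) ≤ Real.exp (-(Λ / 32 * x)) / 2
  probability : ((2 * (x ^ 6 : ℕ) + 1) * (2 * ((x ^ 6) ^ 6 : ℕ) + 1) : ℝ)
      * (2 * Real.exp (-(Λ / 2 * x)) / ((1 / (x ^ 6 : ℕ)) * Real.exp (-(Λ / 8 * x)) ^ 2))
    + 4 * boundaryBound (1 / (x ^ 6 : ℕ)) M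
      (Real.exp (-((x ^ 6 : ℕ) : ℝ)) / (2 * (2 * M + 4) ^ (2 * x ^ 6 + 1)))
      (Real.exp (-(Λ * (x ^ 6 : ℕ)))) ((x ^ 6) ^ 6 - x ^ 6 - 3) < 1

lemma pow_two_mul_eq_exp {D : ℝ} (hD : 0 < D) (n : ℕ) :
    D ^ (2 * n) = Real.exp (2 * Real.log D * n) := by
  rw [← Real.rpow_natCast, Real.rpow_def_of_pos hD]
  push_cast
  ring_nf

lemma boundaryBound_le {M Λ : ℝ} (hM : 0 ≤ M) {N : ℕ} (hN : 2 ≤ N)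
    (hN' : 115200 * (2 * Real.log (2 * M + 4) * 2 + 3 + Λ) ≤ N) :
    boundaryBound (1 / N) M (Real.exp (-N) / (2 * (2 * M + 4) ^ (2 * N + 1)))
      (Real.exp (-(Λ * N))) (N ^ 6 - N - 3)
      ≤ 8 * (2 * M + 4) ^ 2 * (M + 2) * (N : ℝ) ^ 2 * Real.exp (-(1 * N)) := by
  have hNR : (2 : ℝ) ≤ N := by exact_mod_cast hN
  have hD : 0 < 2 * M + 4 := by linarith
  set q := (N ^ 6 - N - 3) / 2 with hq
  have hqle : (N : ℝ) ^ 6 / 4 ≤ q := by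
    have h1 : 32 * N ≤ N ^ 6 := by
      calc 32 * N = 2 ^ 5 * N := by norm_num
        _ ≤ N ^ 5 * N := by gcongr
        _ = N ^ 6 := by ring
    have h2 : N ^ 6 ≤ 4 * q := by omega
    have h3 : (N : ℝ) ^ 6 ≤ 4 * q := by exact_mod_cast h2
    linarith
  have hρ : 0 ≤ 1 - (1 / (N : ℝ)) ^ 4 / 14400 := by
    have : (1 / (N : ℝ)) ^ 4 ≤ 1 := pow_le_one₀ (by positivity)
      ((div_le_one (by positivity)).2 (by linarith))
    linarith
  have hpow : (1 - (1 / (N : ℝ)) ^ 4 / 14400) ^ q ≤ Real.exp (-((N : ℝ) ^ 2 / 57600)) := by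
    calc _ ≤ Real.exp (-((1 / (N : ℝ)) ^ 4 / 14400)) ^ q := by
          gcongr
          linarith [Real.add_one_le_exp (-((1 / (N : ℝ)) ^ 4 / 14400))]
      _ = Real.exp (q * -((1 / (N : ℝ)) ^ 4 / 14400)) := by rw [← Real.exp_nat_mul]
      _ ≤ _ := by
          refine Real.exp_le_exp.2 ?_
          rw [mul_neg, neg_le_neg_iff]
          calc (N : ℝ) ^ 2 / 57600 = (N : ℝ) ^ 6 / 4 * ((1 / (N : ℝ)) ^ 4 / 14400) := by
                field_simp; norm_num
            _ ≤ _ := by gcongr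
  have hsqrt : √(4 / (1 / N) * (1 - (1 / (N : ℝ)) ^ 4 / 14400) ^ q)
      ≤ 2 * N * Real.exp (-((N : ℝ) ^ 2 / 115200)) := by
    refine Real.sqrt_le_iff.2 ⟨by positivity, ?_⟩
    calc _ ≤ 4 / (1 / N) * Real.exp (-((N : ℝ) ^ 2 / 57600)) := by gcongr
      _ = 4 * N * Real.exp (-((N : ℝ) ^ 2 / 57600)) := by field_simp
      _ ≤ 4 * (N * N) * Real.exp (-((N : ℝ) ^ 2 / 57600)) := by
          gcongr; nlinarith
      _ = _ := by
          rw [mul_pow, ← Real.exp_nat_mul]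
          push_cast
          rw [show 2 * -((N : ℝ) ^ 2 / 115200) = -((N : ℝ) ^ 2 / 57600) by ring]
          ring
  have hDpow : (2 * M + 4) ^ (2 * N + 1)
      = (2 * M + 4) * Real.exp (2 * Real.log (2 * M + 4) * N) := by
    rw [pow_succ', pow_two_mul_eq_exp hD]
  unfold boundaryBound
  rw [← hq]
  calc _ ≤ (2 * (1 / (N : ℝ)))⁻¹ * (((Real.exp (-N) / (2 * (2 * M + 4) ^ (2 * N + 1))) ^ 2)⁻¹
        * ((Real.exp (-(Λ * N)))⁻¹
        * (2 * N * Real.exp (-((N : ℝ) ^ 2 / 115200)) * (2 * (M + 2))))) := by gcongr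
    _ = 8 * (2 * M + 4) ^ 2 * (M + 2) * (N : ℝ) ^ 2 * Real.exp (2 * Real.log (2 * M + 4) * 2 * N
        + 2 * N + Λ * N - (N : ℝ) ^ 2 / 115200) := by
        rw [hDpow, show 2 * Real.log (2 * M + 4) * 2 * N + 2 * N + Λ * N - (N : ℝ) ^ 2 / 115200
          = (2 * Real.log (2 * M + 4) * N + 2 * Real.log (2 * M + 4) * N)
            + (N + N) + Λ * N + -((N : ℝ) ^ 2 / 115200) by ring,
          Real.exp_add, Real.exp_add, Real.exp_add, Real.exp_add, Real.exp_add,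
          Real.exp_neg (N : ℝ), Real.exp_neg (Λ * N)]
        field_simp
        ring
    _ ≤ _ := by
        gcongr
        nlinarith

lemma eventually_scaleBounds {M : ℝ} (hM : 0 ≤ M) {Λ : ℝ} (hΛ : 32 ≤ Λ)
    (hΛM : 32 * (Real.log (2 * M + 4) + 1) ≤ Λ) : ∀ᶠ x in Filter.atTop, ScaleBounds M Λ x := by
  have h6 : Filter.Tendsto (fun x : ℕ => x ^ 6) Filter.atTop Filter.atTop :=
    Filter.tendsto_pow_atTop (by norm_num)
  filter_upwards [Filter.eventually_ge_atTop 2,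
    eventually_const_mul_pow_mul_exp_lt 3 36 (c := Λ / 4) (by linarith) (r := 1 / 4) (by norm_num),
    h6.eventually (eventually_const_mul_pow_mul_exp_lt 3 1 (c := 2) (by norm_num) (r := 3 / 4)
      (by norm_num)),
    h6.eventually (eventually_const_mul_pow_mul_exp_lt 12 1 (c := 1) (by norm_num) one_pos),
    eventually_const_mul_pow_mul_exp_lt 2 0 (c := Λ / 32) (by linarith) one_pos,
    eventually_const_mul_pow_mul_exp_lt 16 0 (c := Λ / 16) (by linarith) (r := 1 / 2) (by norm_num),
    eventually_const_mul_pow_mul_exp_lt 6 36 (c := 3 * Λ / 16) (by linarith) (r := 1 / 2)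
      (by norm_num),
    eventually_const_mul_pow_mul_exp_lt 18 48 (c := Λ / 4) (by linarith) (r := 1 / 2) (by norm_num),
    h6.eventually (eventually_const_mul_pow_mul_exp_lt (8 * (2 * M + 4) ^ 2 * (M + 2)) 2 (c := 1)
      (by norm_num) (r := 1 / 8) (by norm_num)),
    h6.eventually ((tendsto_natCast_atTop_atTop (R := ℝ)).eventually_ge_atTop
      (115200 * (2 * Real.log (2 * M + 4) * 2 + 3 + Λ)))]
    with x hx ha hb hd he hg1 hg2 hp1 hp2 hN'
  have hxR : (2 : ℝ) ≤ x := by exact_mod_cast hx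
  have hx1 : (1 : ℝ) ≤ x ^ 36 := one_le_pow₀ (by linarith)
  have hx6 : (1 : ℝ) ≤ x ^ 6 := one_le_pow₀ (by linarith)
  have h32 : 32 * (x : ℝ) ≤ x ^ 6 := by
    calc 32 * (x : ℝ) = 2 ^ 5 * x := by norm_num
      _ ≤ x ^ 5 * x := by gcongr
      _ = x ^ 6 := by ring
  have h2exp : ∀ a : ℝ, Λ / 32 * x ≤ a → 2 * Real.exp (-a) < 1 := fun a ha => by
    refine lt_of_le_of_lt ?_ he
    rw [pow_zero, mul_one]
    gcongr
  have hΛx : 0 ≤ Λ * x := by positivity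
  have hΛx6 : 32 * (Λ * x) ≤ Λ * x ^ 6 := by nlinarith
  have hxx : ((x : ℝ) ^ 6) ^ 6 = x ^ 36 := by ring
  have hsq : ∀ a : ℝ, Real.exp a ^ 2 = Real.exp (2 * a) := fun a => by
    rw [← Real.exp_nat_mul]; norm_num
  constructor
  · exact hx
  · push_cast
    rw [hxx, hsq, show 2 * -(Λ / 8 * x) = -(Λ / 4 * x) by ring]
    refine le_trans ?_ ha.le
    gcongr; linarith
  · push_cast at hb ⊢
    rw [hsq, mul_neg]
    refine le_trans ?_ hb.le
    gcongr; linarith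
  · push_cast
    exact Real.exp_le_exp.2 (by linarith)
  · have hD : 0 < 2 * M + 4 := by linarith
    rw [pow_two_mul_eq_exp hD]
    push_cast at hd ⊢
    calc _ ≤ Real.exp (-(Λ / 16 * x ^ 6))
          * (4 * Real.exp (2 * Real.log (2 * M + 4) * x ^ 6) * (3 * x ^ 6)) := by
          gcongr; linarith
      _ = 12 * x ^ 6 * Real.exp (-(Λ / 16 * x ^ 6) + 2 * Real.log (2 * M + 4) * x ^ 6) := by
          rw [Real.exp_add]; ring
      _ ≤ 12 * (x ^ 6) ^ 1 * Real.exp (-(1 * x ^ 6)) := by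
          rw [pow_one]
          gcongr
          nlinarith
      _ ≤ 1 := hd.le
  · rw [hsq, hsq]
    have := h2exp (Λ * x) (by linarith)
    rw [show 2 * -(Λ * x) = 2 * -(Λ / 2 * x) + -(Λ * x) by ring, Real.exp_add]
    nlinarith [Real.exp_pos (2 * -(Λ / 2 * x))]
  · have := h2exp (7 * Λ / 16 * x) (by linarith)
    rw [show -(Λ / 2 * x) = -(Λ / 16 * x) + -(7 * Λ / 16 * x) by ring, Real.exp_add]
    nlinarith [Real.exp_pos (-(Λ / 16 * x))]
  · rw [hsq, hsq, hsq]
    push_cast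
    rw [hxx, mul_div_assoc, ← Real.exp_sub,
      show 2 * -(Λ / 8 * x) - 2 * -(Λ / 16 * x) = 2 * -(Λ / 32 * x) + -(Λ / 16 * x) by ring,
      show 2 * -(Λ / 8 * x) = 2 * -(Λ / 32 * x) + -(3 * Λ / 16 * x) by ring, Real.exp_add,
      Real.exp_add]
    have h3 : 2 * (2 * (x : ℝ) ^ 36 + 1) * Real.exp (-(3 * Λ / 16 * x)) ≤ 1 / 2 := by
      exact (mul_le_mul_of_nonneg_right (by linarith) (Real.exp_pos _).le).trans hg2.le
    rw [pow_zero, mul_one] at hg1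
    nlinarith [Real.exp_pos (2 * -(Λ / 32 * x))]
  · push_cast
    have := h2exp (Λ / 32 * (x ^ 6 - x)) (by linarith)
    rw [show -(Λ / 32 * x ^ 6) = -(Λ / 32 * x) + -(Λ / 32 * (x ^ 6 - x)) by ring, Real.exp_add]
    nlinarith [Real.exp_pos (-(Λ / 32 * x))]
  · have hbb := boundaryBound_le (Λ := Λ) hM (N := x ^ 6)
      (by calc 2 ≤ x := hx
            _ ≤ x ^ 6 := Nat.le_self_pow (by norm_num) x) hN'
    have hlast : ((2 * (x ^ 6 : ℕ) + 1) * (2 * ((x ^ 6) ^ 6 : ℕ) + 1) : ℝ)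
        * (2 * Real.exp (-(Λ / 2 * x)) / ((1 / (x ^ 6 : ℕ)) * Real.exp (-(Λ / 8 * x)) ^ 2))
        ≤ 1 / 2 := by
      refine le_trans ?_ hp1.le
      push_cast
      rw [hxx, hsq]
      calc _ ≤ (3 * x ^ 6 * (3 * x ^ 36)) *
            (2 * Real.exp (-(Λ / 2 * x)) / (1 / x ^ 6 * Real.exp (2 * -(Λ / 8 * x)))) := by
            gcongr <;> linarith
        _ = 18 * x ^ 48 * (Real.exp (-(Λ / 2 * x)) / Real.exp (2 * -(Λ / 8 * x))) := by
            field_simp; ring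
        _ = _ := by rw [← Real.exp_sub]; congr 2; ring
    linarith

open Real in
/-- A sequence of potentials, each nonresonant relative to its predecessor along the scales `s`,
which stabilizes to `U` on every box. -/
structure IsPotentialTower (M Λ : ℝ) (s : ℕ → ℕ) (P : ℕ → ℤ → ℝ) (U : ℤ → ℝ) : Prop where
  le_rate : 32 ≤ Λ
  bounds : ∀ k, ScaleBounds M Λ (s k)
  scale_succ : ∀ k, s (k + 1) = s k ^ 6
  abs_le : ∀ k n, |P k n| ≤ M
  nonresonant : ∀ k, IsNonresonant (P k) (P (k + 1)) (s (k + 1)) (s (k + 2))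
    (exp (-(Λ / 2 * s k))) (exp (-(Λ / 8 * s k))) (exp (-(s (k + 1) : ℝ)))
    (exp (-(Λ * s (k + 1))))
  limit : ∀ k, ∀ n ∈ latticeBox (s (k + 1)), U n = P k n

lemma exists_lp_of_eq_zero {f : ℤ → ℝ} {N : ℕ} (hf : ∀ n ∉ latticeBox N, f n = 0) :
    ∃ F : lp (fun _ : ℤ => ℝ) 2, ∀ n, F n = f n :=
  ⟨⟨f, memℓp_gen (summable_of_ne_finset_zero (s := latticeBox N)
    fun n hn => by simp [hf n hn])⟩, fun _ => rfl⟩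

lemma inner_eq_sum_of_eq_zero (F G : lp (fun _ : ℤ => ℝ) 2) {N : ℕ}
    (hG : ∀ n ∉ latticeBox N, G n = 0) : inner ℝ F G = ∑ n ∈ latticeBox N, F n * G n := by
  rw [lp.inner_eq_tsum, tsum_eq_sum (s := latticeBox N) fun n hn => by simp [hG n hn]]
  simp [mul_comm]

lemma norm_sq_eq_sum_of_eq_zero (G : lp (fun _ : ℤ => ℝ) 2) {N : ℕ}
    (hG : ∀ n ∉ latticeBox N, G n = 0) : ‖G‖ ^ 2 = ∑ n ∈ latticeBox N, G n ^ 2 := by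
  rw [← real_inner_self_eq_norm_sq, inner_eq_sum_of_eq_zero G G hG]
  simp [sq]

lemma sum_sq_le_norm_sq (F : lp (fun _ : ℤ => ℝ) 2) (s : Finset ℤ) :
    ∑ n ∈ s, F n ^ 2 ≤ ‖F‖ ^ 2 := by
  have h := lp.hasSum_inner F F (𝕜 := ℝ)
  rw [real_inner_self_eq_norm_sq] at h
  simpa [sq] using sum_le_hasSum s (fun n _ => real_inner_self_nonneg) h

namespace IsPotentialTower

variable {M Λ : ℝ} {s : ℕ → ℕ} {P : ℕ → ℤ → ℝ} {U : ℤ → ℝ}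

lemma scale_two_le (T : IsPotentialTower M Λ s P U) (k : ℕ) : 2 ≤ s k := (T.bounds k).two_le

lemma scale_lt (T : IsPotentialTower M Λ s P U) (k : ℕ) : s k < s (k + 1) := by
  rw [T.scale_succ]
  exact lt_self_pow₀ (T.scale_two_le k) (by norm_num)

lemma localized (T : IsPotentialTower M Λ s P U) {k : ℕ} {e E : ℝ} {ψ φ : ℤ → ℝ}
    (hψ : IsBoxEigenvector (P k) (s (k + 1)) e ψ)
    (hφ : IsBoxEigenvector (P (k + 1)) (s (k + 2)) E φ)
    (hE : |E - e| ≤ Real.exp (-(Λ / 2 * s k))) :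
    IsLocalizedEigenvector (P (k + 1)) (s (k + 2)) (Real.exp (-(Λ * s (k + 1))))
      (Real.exp (-(Λ / 16 * s (k + 1)))) E φ := by
  have B := T.bounds k
  have h1 := B.shell
  have h2 := B.core
  have h3 := B.gap_le
  have h4 := B.gap_mul_le
  simp only [← T.scale_succ] at h1 h2 h3 h4
  exact (T.nonresonant k).localized (T.abs_le _) (T.scale_lt _).le h1 h2 h3 h4
    (Real.exp_pos _).le hψ hφ hE

lemma exists_extend (T : IsPotentialTower M Λ s P U) {k : ℕ} {e : ℝ} {ψ : ℤ → ℝ}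
    (hψ : IsLocalizedEigenvector (P k) (s (k + 1)) (Real.exp (-(Λ * s k)))
      (Real.exp (-(Λ / 16 * s k))) e ψ) :
    ∃ E φ, IsLocalizedEigenvector (P (k + 1)) (s (k + 2)) (Real.exp (-(Λ * s (k + 1))))
      (Real.exp (-(Λ / 16 * s (k + 1)))) E φ ∧ |E - e| ≤ Real.exp (-(Λ / 32 * s k)) ∧
      ∑ n ∈ latticeBox (s (k + 2)), (φ n - ψ n) ^ 2 ≤ Real.exp (-(Λ / 32 * s k)) ^ 2 := by
  have B := T.bounds k
  have h1 := B.shell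
  have h2 := B.core
  have h3 := B.gap_le
  have h4 := B.gap_mul_le
  have h5 := B.step
  simp only [← T.scale_succ] at h1 h2 h3 h4 h5
  obtain ⟨E, φ, hφ, hE, hd⟩ := (T.nonresonant k).extend (T.abs_le _) (T.scale_lt _)
    (by linarith [T.scale_two_le (k + 1)]) h1 h2 h3 h4 (Real.exp_pos _).le (Real.exp_pos _)
    B.edge B.window hψ
  refine ⟨E, φ, hφ, hE.trans (Real.exp_le_exp.2 ?_), hd.trans h5⟩
  have := T.le_rate
  have : (0 : ℝ) ≤ s k := by positivity
  nlinarith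

lemma exp_scale_add_le (T : IsPotentialTower M Λ s P U) (k j : ℕ) :
    Real.exp (-(Λ / 32 * s (k + j))) ≤ 2 * Real.exp (-(Λ / 32 * s k)) / 2 / 2 ^ j := by
  induction j with
  | zero => simp
  | succ j ih =>
    have h := (T.bounds (k + j)).halving
    rw [← T.scale_succ] at h
    calc _ ≤ _ := h
      _ ≤ _ := div_le_div_of_nonneg_right ih (by norm_num)
      _ = _ := by rw [pow_succ]; field_simp

lemma exp_scale_lt (T : IsPotentialTower M Λ s P U) (k : ℕ) :
    2 * Real.exp (-(Λ / 32 * s k)) < 1 := by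
  have h1 : (2 : ℝ) ≤ s k := by exact_mod_cast T.scale_two_le k
  have h2 : Real.exp (-(Λ / 32 * s k)) ≤ Real.exp (-2) :=
    Real.exp_le_exp.2 (by nlinarith [T.le_rate])
  have h3 : Real.exp (-2) * Real.exp 2 = 1 := by rw [← Real.exp_add]; simp
  nlinarith [Real.add_one_le_exp (2 : ℝ), Real.exp_pos (-2)]

/-- Every localized box eigenvector is shadowed by an eigenfunction on the whole lattice. -/
lemma exists_isEigenfunction (T : IsPotentialTower M Λ s P U) {k : ℕ} {e : ℝ} {ψ : ℤ → ℝ}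
    (hψ : IsLocalizedEigenvector (P k) (s (k + 1)) (Real.exp (-(Λ * s k)))
      (Real.exp (-(Λ / 16 * s k))) e ψ) :
    ∃ E Ψ, IsEigenfunction U E Ψ ∧ ∀ f : lp (fun _ : ℤ => ℝ) 2,
      |inner ℝ f Ψ - ∑ n ∈ latticeBox (s (k + 1)), f n * ψ n|
        ≤ 2 * Real.exp (-(Λ / 32 * s k)) * ‖f‖ := by
  have hstep : ∀ (j : ℕ) (p : ℝ × (ℤ → ℝ)), ∃ q : ℝ × (ℤ → ℝ),
      IsLocalizedEigenvector (P (k + j)) (s (k + j + 1)) (Real.exp (-(Λ * s (k + j))))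
        (Real.exp (-(Λ / 16 * s (k + j)))) p.1 p.2 →
      IsLocalizedEigenvector (P (k + j + 1)) (s (k + j + 2)) (Real.exp (-(Λ * s (k + j + 1))))
        (Real.exp (-(Λ / 16 * s (k + j + 1)))) q.1 q.2 ∧
      |q.1 - p.1| ≤ Real.exp (-(Λ / 32 * s (k + j))) ∧
      ∑ n ∈ latticeBox (s (k + j + 2)), (q.2 n - p.2 n) ^ 2
        ≤ Real.exp (-(Λ / 32 * s (k + j))) ^ 2 := fun j p => by
    by_cases hp : IsLocalizedEigenvector (P (k + j)) (s (k + j + 1))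
      (Real.exp (-(Λ * s (k + j)))) (Real.exp (-(Λ / 16 * s (k + j)))) p.1 p.2
    · obtain ⟨E, φ, h⟩ := T.exists_extend hp
      exact ⟨(E, φ), fun _ => h⟩
    · exact ⟨p, fun h => absurd h hp⟩
  choose Q hQ using hstep
  let a : ℕ → ℝ × (ℤ → ℝ) := fun j => Nat.rec (e, ψ) Q j
  have ha : ∀ j, IsLocalizedEigenvector (P (k + j)) (s (k + j + 1)) (Real.exp (-(Λ * s (k + j))))
      (Real.exp (-(Λ / 16 * s (k + j)))) (a j).1 (a j).2 := fun j => by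
    induction j with
    | zero => exact hψ
    | succ j ih => exact (hQ j _ ih).1
  choose Φ hΦ using fun j => exists_lp_of_eq_zero (ha j).zero
  have hsupp : ∀ j, ∀ n ∉ latticeBox (s (k + j + 1)), Φ j n = 0 := fun j n hn => by
    rw [hΦ]; exact (ha j).zero n hn
  have hE : ∀ j, dist (a j).1 (a (j + 1)).1 ≤ 2 * Real.exp (-(Λ / 32 * s k)) / 2 / 2 ^ j :=
    fun j => by
      rw [dist_comm]
      exact ((hQ j _ (ha j)).2.1).trans (T.exp_scale_add_le k j)
  have hd : ∀ j, dist (Φ j) (Φ (j + 1)) ≤ 2 * Real.exp (-(Λ / 32 * s k)) / 2 / 2 ^ j := fun j => by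
    refine le_trans ?_ (T.exp_scale_add_le k j)
    rw [dist_comm, dist_eq_norm]
    refine abs_le_of_sq_le_sq' ?_ (Real.exp_pos _).le |>.2
    rw [norm_sq_eq_sum_of_eq_zero (N := s (k + j + 2)) _ fun n hn => ?_]
    · simpa [hΦ] using (hQ j _ (ha j)).2.2
    · rw [lp.coeFn_sub, Pi.sub_apply, hsupp (j + 1) n hn,
        hsupp j n fun h => hn (latticeBox_mono (T.scale_lt _).le h), sub_zero]
  obtain ⟨E, hElim⟩ := cauchySeq_tendsto_of_complete (cauchySeq_of_le_geometric_two hE)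
  obtain ⟨Ψ, hΨlim⟩ := cauchySeq_tendsto_of_complete (cauchySeq_of_le_geometric_two hd)
  have hdist := dist_le_of_le_geometric_two_of_tendsto₀ hd hΨlim
  have hnorm : ‖Φ 0‖ = 1 := by
    have h := norm_sq_eq_sum_of_eq_zero (Φ 0) (hsupp 0)
    simp only [hΦ, (ha 0).norm] at h
    exact (pow_eq_one_iff_of_nonneg (norm_nonneg _) two_ne_zero).1 h
  have hcoord : ∀ n, Filter.Tendsto (fun j => (a j).2 n) Filter.atTop (nhds (Ψ n)) := fun n => by
    refine tendsto_iff_dist_tendsto_zero.2 (squeeze_zero (fun _ => dist_nonneg) (fun j => ?_)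
      (tendsto_iff_dist_tendsto_zero.1 hΨlim))
    rw [← hΦ, dist_eq_norm, dist_eq_norm]
    exact lp.norm_apply_le_norm (by norm_num) (Φ j - Ψ) n
  refine ⟨E, Ψ, ⟨fun h0 => ?_, fun n => ?_⟩, fun f => ?_⟩
  · rw [h0, dist_zero_right, hnorm] at hdist
    linarith [T.exp_scale_lt k]
  · refine tendsto_nhds_unique (((hcoord (n + 1)).add (hcoord (n - 1))).add
      ((hcoord n).const_mul (U n))) ((hElim.mul (hcoord n)).congr' ?_)
    filter_upwards [Filter.eventually_ge_atTop n.natAbs] with j hj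
    have hs : j ≤ s (k + j + 1) := by
      have hmono := strictMono_nat_of_lt_succ T.scale_lt
      exact le_trans (b := k + j + 1) (by omega) (hmono.id_le _)
    have hn : n ∈ latticeBox (s (k + j + 1)) := by rw [Finset.mem_Icc]; omega
    rw [T.limit _ n hn]
    exact ((ha j).eqn n hn).symm
  · have h0 : ∑ n ∈ latticeBox (s (k + 1)), f n * ψ n = inner ℝ f (Φ 0) := by
      rw [inner_eq_sum_of_eq_zero f (Φ 0) (hsupp 0)]
      exact Finset.sum_congr rfl fun n _ => by rw [hΦ]; rfl
    rw [h0, ← inner_sub_right, mul_comm]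
    refine (abs_real_inner_le_norm _ _).trans (mul_le_mul_of_nonneg_left ?_ (norm_nonneg _))
    rwa [← dist_eq_norm, dist_comm]

lemma abs_sum_le (T : IsPotentialTower M Λ s P U) {k : ℕ} {e : ℝ} {ψ : ℤ → ℝ}
    {f : lp (fun _ : ℤ => ℝ) 2} (hf : ∀ E Ψ, IsEigenfunction U E Ψ → inner ℝ f Ψ = 0)
    (hψ : IsBoxEigenvector (P k) (s (k + 1)) e ψ)
    (hb : |ψ (s (k + 1))| ≤ Real.exp (-(Λ * s k)) ∧ |ψ (-s (k + 1))| ≤ Real.exp (-(Λ * s k))) :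
    |∑ n ∈ latticeBox (s (k + 1)), ψ n * f n|
      ≤ (2 * s (k + 2) + 1) * (2 * Real.exp (-(Λ / 32 * s (k + 1))) * ‖f‖)
        + 2 * Real.exp (-(Λ * s k)) * ‖f‖ / Real.exp (-(Λ / 2 * s k)) := by
  refine (T.nonresonant k).abs_sum_le (T.scale_lt _) (Real.exp_pos _) (Real.exp_pos _).le hψ
    hb.1 hb.2 (norm_nonneg f) (sum_sq_le_norm_sq f _) (by positivity) fun E φ hφ hE => ?_
  obtain ⟨E', Ψ, hΨ, h⟩ := T.exists_isEigenfunction (T.localized hψ hφ hE)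
  simpa [hf E' Ψ hΨ] using h f

lemma abs_apply_le (T : IsPotentialTower M Λ s P U) {k : ℕ} {m : ℤ}
    {f : lp (fun _ : ℤ => ℝ) 2} (hf : ∀ E Ψ, IsEigenfunction U E Ψ → inner ℝ f Ψ = 0)
    (hm : m ∈ latticeBox (s (k + 1))) :
    |f m| ≤ 27 * ‖f‖ * (s (k + 1) : ℝ) ^ 42 * Real.exp (-(1 * s (k + 1))) := by
  classical
  have hm' := latticeBox_mono (T.scale_lt (k + 1)).le hm
  obtain ⟨e, ψ, hb⟩ := exists_isBoxEigenbasis (P (k + 1)) (s (k + 2))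
  set x : ℝ := (s (k + 1) : ℝ) with hx
  set R := ‖f‖
  have hR : 0 ≤ R := norm_nonneg f
  have hx1 : 1 ≤ x := by
    rw [hx]; exact_mod_cast (T.scale_two_le (k + 1)).trans' (by norm_num)
  have h2 : (s (k + 2) : ℝ) = x ^ 6 := by rw [T.scale_succ (k + 1)]; push_cast; rfl
  have h3 : (s (k + 3) : ℝ) = x ^ 36 := by
    rw [T.scale_succ (k + 2)]; push_cast; rw [h2]; ring
  have hΛ := T.le_rate
  have hcoef : ∀ j, |∑ n ∈ latticeBox (s (k + 2)), ψ j n * f n| ≤ R := fun j => by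
    refine abs_le_of_sq_le_sq ?_ hR
    calc _ ≤ (∑ n ∈ latticeBox (s (k + 2)), ψ j n ^ 2) * ∑ n ∈ latticeBox (s (k + 2)), f n ^ 2 :=
          Finset.sum_mul_sq_le_sq_mul_sq _ _ _
      _ ≤ _ := by rw [(hb.eig j).norm, one_mul]; exact sum_sq_le_norm_sq f _
  have hterm : ∀ j, |ψ j m * ∑ n ∈ latticeBox (s (k + 2)), ψ j n * f n|
      ≤ 9 * R * x ^ 36 * Real.exp (-(1 * x)) := fun j => by
    have hx36 : 1 ≤ x ^ 36 := one_le_pow₀ hx1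
    have he := Real.exp_pos (-(1 * x))
    rw [abs_mul]
    rcases le_or_gt (Real.exp (-x)) |ψ j m| with h | h
    · have hbd := (T.nonresonant k).boundary _ _ (hb.eig j) m hm h
      have hs := T.abs_sum_le hf (hb.eig j) hbd
      rw [h2, h3] at hs
      have e1 : Real.exp (-(Λ / 32 * x ^ 6)) ≤ Real.exp (-(1 * x)) := Real.exp_le_exp.2 (by
        have : x ≤ x ^ 6 := le_self_pow₀ hx1 (by norm_num)
        nlinarith)
      have e2 : 2 * Real.exp (-(Λ * x)) * R / Real.exp (-(Λ / 2 * x))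
          ≤ 2 * R * Real.exp (-(1 * x)) := by
        calc _ = 2 * R * (Real.exp (-(Λ * x)) / Real.exp (-(Λ / 2 * x))) := by ring
          _ ≤ _ := by
            rw [← Real.exp_sub]
            gcongr
            nlinarith
      calc |ψ j m| * _ ≤ 1 * _ := by
            gcongr
            exact (hb.eig j).abs_le_one m
        _ ≤ (2 * x ^ 36 + x ^ 36) * (2 * Real.exp (-(1 * x)) * R)
            + 2 * R * Real.exp (-(1 * x)) * x ^ 36 := by
            rw [one_mul]
            refine hs.trans (add_le_add ?_ (e2.trans (le_mul_of_one_le_right (by positivity) hx36)))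
            gcongr
        _ ≤ _ := by
          have : 0 ≤ R * x ^ 36 * Real.exp (-(1 * x)) := by positivity
          linarith
    · calc _ ≤ Real.exp (-x) * R := mul_le_mul h.le (hcoef j) (abs_nonneg _) (Real.exp_pos _).le
        _ = 1 * R * 1 * Real.exp (-(1 * x)) := by rw [one_mul x]; ring
        _ ≤ _ := by gcongr; norm_num
  have hpar := hb.parseval (Pi.single m 1) f
  simp only [Pi.single_apply, ite_mul, one_mul, zero_mul, Finset.sum_ite_eq', if_pos hm',
    mul_comm (f _)] at hpar
  rw [← hpar]
  refine (Finset.abs_sum_le_sum_abs _ _).trans ((Finset.sum_le_card_nsmul _ _ _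
    fun j _ => hterm j).trans ?_)
  rw [Finset.card_univ, Fintype.card_coe, card_latticeBox, nsmul_eq_mul]
  push_cast
  rw [h2]
  have hx6 : 1 ≤ x ^ 6 := one_le_pow₀ hx1
  calc _ ≤ (2 * x ^ 6 + x ^ 6) * (9 * R * x ^ 36 * Real.exp (-(1 * x))) := by
        gcongr
    _ = _ := by ring

lemma hasPurePointSpectrum (T : IsPotentialTower M Λ s P U) : HasPurePointSpectrum U := by
  rw [HasPurePointSpectrum, Submodule.topologicalClosure_eq_top_iff, Submodule.eq_bot_iff]
  intro f hf
  have hf' : ∀ E Ψ, IsEigenfunction U E Ψ → inner ℝ f Ψ = 0 := fun E Ψ h =>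
    Submodule.inner_left_of_mem_orthogonal
      (K := Submodule.span ℝ {ψ | ∃ E : ℝ, IsEigenfunction U E ψ})
      (Submodule.subset_span ⟨E, h⟩) hf
  have hmono := strictMono_nat_of_lt_succ T.scale_lt
  ext m
  have hlim := (tendsto_const_mul_pow_mul_exp (27 * ‖f‖) 42 one_pos).comp
    (hmono.tendsto_atTop.comp (Filter.tendsto_add_atTop_nat 1))
  refine abs_nonpos_iff.1 (ge_of_tendsto hlim ?_)
  filter_upwards [Filter.eventually_ge_atTop m.natAbs] with k hk
  refine T.abs_apply_le hf' ?_
  have : k + 1 ≤ s (k + 1) := hmono.id_le _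
  rw [Finset.mem_Icc]
  omega

end IsPotentialTower

lemma IsNonresonant.congr {U U' U'' : ℤ → ℝ} {N N' : ℕ} {h κ₁ κ₂ δ' : ℝ}
    (H : IsNonresonant U U' N N' h κ₁ κ₂ δ') (hN : N ≤ N')
    (hU : ∀ n ∈ latticeBox N', U' n = U'' n) : IsNonresonant U U'' N N' h κ₁ κ₂ δ' :=
  ⟨fun n hn => by rw [← hU n (latticeBox_mono hN hn), H.agree n hn],
    fun e ψ E φ hψ hφ => H.shell e ψ E φ hψ (hφ.congr hU),
    fun E φ hφ => H.boundary E φ (hφ.congr hU)⟩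

lemma IsPeriodicPotential.add {W W' : ℤ → ℝ} (h : IsPeriodicPotential W)
    (h' : IsPeriodicPotential W') : IsPeriodicPotential (fun n => W n + W' n) := by
  obtain ⟨p, hp, hW⟩ := h
  obtain ⟨q, hq, hW'⟩ := h'
  refine ⟨p * q, Nat.mul_pos hp hq, fun n => ?_⟩
  have h1 : Function.Periodic W (p : ℤ) := hW
  have h2 : Function.Periodic W' (q : ℤ) := hW'
  have e1 := h1.nat_mul q n
  have e2 := h2.nat_mul p n
  push_cast at e1 e2 ⊢
  rw [e2, mul_comm, e1]

lemma ScaleBounds.exists_isNonresonant {M Λ : ℝ} {x : ℕ} (B : ScaleBounds M Λ x) {U : ℤ → ℝ}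
    (hU : ∀ n, |U n| ≤ M - 1) :
    ∃ W : ℤ → ℝ, IsPeriodicPotential W ∧ (∀ n, |W n| ≤ 1 / (x ^ 6 : ℕ)) ∧
      IsNonresonant U (fun n => U n + W n) (x ^ 6) ((x ^ 6) ^ 6)
        (Real.exp (-(Λ / 2 * x))) (Real.exp (-(Λ / 8 * x))) (Real.exp (-((x ^ 6 : ℕ) : ℝ)))
        (Real.exp (-(Λ * (x ^ 6 : ℕ)))) := by
  have hx : 64 ≤ x ^ 6 := (Nat.pow_le_pow_left B.two_le 6).trans' (by norm_num)
  have hx' : (64 : ℝ) ≤ (x ^ 6 : ℕ) := by exact_mod_cast hx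
  have hN : x ^ 6 + 3 ≤ (x ^ 6) ^ 6 := by
    calc x ^ 6 + 3 ≤ x ^ 6 * x ^ 6 ^ 1 := by rw [pow_one]; nlinarith
      _ = (x ^ 6) ^ 2 := by ring
      _ ≤ _ := Nat.pow_le_pow_right (by omega) (by norm_num)
  obtain ⟨w, hw, -, hres⟩ := _root_.exists_isNonresonant (by positivity)
    (by rw [div_le_one (by linarith)]; linarith) hU hN (Real.exp_pos _) (Real.exp_pos _)
    (Real.exp_pos _) (Real.exp_pos _) B.probability
  generalize (x ^ 6) ^ 6 = N' at hN hres
  refine ⟨fun n => w (n.bmod (2 * N' + 1)), ⟨2 * N' + 1, by omega, fun n => ?_⟩,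
    fun n => hw _, hres.congr (by omega) fun n hn => ?_⟩
  · simp only [Int.add_bmod_right]
  · rw [Finset.mem_Icc] at hn
    have : n.bmod (2 * N' + 1) = n := by rw [Int.bmod_eq_of_le] <;> omega
    simp only [this]

/-- Every potential can be perturbed by uniformly small periodic potentials into a tower. -/
lemma exists_isPotentialTower {M Λ : ℝ} {x : ℕ} {V : ℤ → ℝ} (hΛ : 32 ≤ Λ)
    (hV : ∀ n, |V n| ≤ M - 2) (hx : ∀ y ≥ x, ScaleBounds M Λ y) :
    ∃ s P U, IsPotentialTower M Λ s P U ∧ P 0 = V ∧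
      (∀ k, IsPeriodicPotential fun n => P k n - V n) ∧
      ∀ k n, |U n - P k n| ≤ 1 / x / 2 ^ k := by
  have hx2 : 2 ≤ x := (hx x le_rfl).two_le
  have hxR : (2 : ℝ) ≤ x := by exact_mod_cast hx2
  set s : ℕ → ℕ := fun k => x ^ 6 ^ k with hs
  have hsucc : ∀ k, s (k + 1) = s k ^ 6 := fun k => by rw [hs]; ring
  have hsge : ∀ k, x * 2 ^ k ≤ s k := fun k => by
    induction k with
    | zero => simp [hs]
    | succ k ih =>
      have h2 : 2 ≤ s k := hx2.trans (le_trans (Nat.le_mul_of_pos_right _ (by positivity)) ih)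
      calc x * 2 ^ (k + 1) = x * 2 ^ k * 2 := by ring
        _ ≤ s k * s k := Nat.mul_le_mul ih h2
        _ = s k ^ 2 := by ring
        _ ≤ s (k + 1) := by rw [hsucc]; exact Nat.pow_le_pow_right (by omega) (by norm_num)
  have hB : ∀ k, ScaleBounds M Λ (s k) := fun k =>
    hx _ ((Nat.le_mul_of_pos_right _ (by positivity)).trans (hsge k))
  have hinv : ∀ k, 1 / (s (k + 1) : ℝ) ≤ 1 / x / 2 / 2 ^ k := fun k => by
    rw [div_div, div_div]
    refine one_div_le_one_div_of_le (by positivity) ?_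
    have h : ((x * 2 ^ (k + 1) : ℕ) : ℝ) ≤ s (k + 1) := by exact_mod_cast hsge (k + 1)
    push_cast at h
    rwa [pow_succ'] at h
  have hstep : ∀ (k : ℕ) (Q : ℤ → ℝ), ∃ W : ℤ → ℝ, IsPeriodicPotential W ∧
      (∀ n, |W n| ≤ 1 / (s (k + 1) : ℝ)) ∧ ((∀ n, |Q n| ≤ M - 1) →
      IsNonresonant Q (fun n => Q n + W n) (s (k + 1)) (s (k + 2))
        (Real.exp (-(Λ / 2 * s k))) (Real.exp (-(Λ / 8 * s k))) (Real.exp (-(s (k + 1) : ℝ)))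
        (Real.exp (-(Λ * s (k + 1))))) := fun k Q => by
    by_cases hQ : ∀ n, |Q n| ≤ M - 1
    · obtain ⟨W, h1, h2, h3⟩ := (hB k).exists_isNonresonant hQ
      rw [← hsucc, ← hsucc] at h3
      rw [← hsucc] at h2
      exact ⟨W, h1, h2, fun _ => h3⟩
    · exact ⟨fun _ => 0, ⟨1, one_pos, fun _ => rfl⟩, fun _ => by simp, fun h => absurd h hQ⟩
  choose F hF1 hF2 hF3 using hstep
  let P : ℕ → ℤ → ℝ := fun k => Nat.rec V (fun k Q n => Q n + F k Q n) k
  have hP : ∀ k n, P (k + 1) n = P k n + F k (P k) n := fun _ _ => rfl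
  have hdist : ∀ n k, dist (P k n) (P (k + 1) n) ≤ 1 / x / 2 / 2 ^ k := fun n k => by
    rw [dist_comm, Real.dist_eq, hP, add_sub_cancel_left]
    exact (hF2 k _ n).trans (hinv k)
  have hnear : ∀ k n, |P k n - V n| ≤ 1 / x * (1 - 1 / 2 ^ k) := fun k n => by
    induction k with
    | zero => simp [P]
    | succ k ih =>
      have h := hdist n k
      rw [dist_comm, Real.dist_eq] at h
      calc _ ≤ |P (k + 1) n - P k n| + |P k n - V n| := abs_sub_le _ _ _
        _ ≤ _ := add_le_add h ih
        _ = _ := by rw [pow_succ]; field_simp; ring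
  have hbdd : ∀ k n, |P k n| ≤ M - 1 := fun k n => by
    have h1 : 1 / (x : ℝ) * (1 - 1 / 2 ^ k) ≤ 1 * 1 := by
      refine mul_le_mul ?_ ?_ ?_ zero_le_one
      · rw [div_le_one (by linarith)]; linarith
      · linarith [show (0 : ℝ) ≤ 1 / 2 ^ k by positivity]
      · rw [sub_nonneg, div_le_one (by positivity)]
        exact one_le_pow₀ (by norm_num)
    have h2 := abs_sub_abs_le_abs_sub (P k n) (V n)
    linarith [hnear k n, hV n]
  have hnon := fun k => hF3 k (P k) (hbdd k)
  have hmono : StrictMono s := strictMono_nat_of_lt_succ fun k => by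
    rw [hsucc]; exact lt_self_pow₀ (hB k).two_le (by norm_num)
  have hstab : ∀ k l, k ≤ l → ∀ n ∈ latticeBox (s (k + 1)), P l n = P k n :=
    fun k l hkl n hn => by
      induction l, hkl using Nat.le_induction with
      | base => rfl
      | succ l hl ih =>
        rw [← ih]
        exact (hnon l).agree n (latticeBox_mono (hmono.monotone (by omega)) hn)
  have hmem : ∀ n : ℤ, n ∈ latticeBox (s (n.natAbs + 1)) := fun n => by
    have : n.natAbs + 1 ≤ s (n.natAbs + 1) := hmono.id_le _
    rw [Finset.mem_Icc]
    omega
  refine ⟨s, P, fun n => P n.natAbs n, ⟨hΛ, hB, hsucc, fun k n => (hbdd k n).trans (by linarith),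
    hnon, fun k n hn => ?_⟩, rfl, fun k => ?_, fun k n => ?_⟩
  · rcases le_total k n.natAbs with h | h
    · exact hstab _ _ h n hn
    · exact (hstab _ _ h n (hmem n)).symm
  · induction k with
    | zero => exact ⟨1, one_pos, fun n => by simp [P]⟩
    | succ k ih =>
      convert ih.add (hF1 k (P k)) using 2 with n
      rw [hP]; ring
  · rw [← Real.dist_eq, dist_comm]
    exact dist_le_of_le_geometric_two_of_tendsto (hdist n)
      (tendsto_atTop_of_eventually_const fun l hl => hstab _ l hl n (hmem n)) k

/-- For every bounded `V` and every `ε > 0` there is a limit-periodic `V_lp` with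
`‖V_lp‖_∞ < ε` such that the Schrödinger operator with potential `V + V_lp` has
pure point spectrum. -/
theorem purePoint_limitPeriodic_perturbation (V : ℤ → ℝ) (hV : ∃ M : ℝ, ∀ n : ℤ, |V n| ≤ M)
    (ε : ℝ) (hε : 0 < ε) :
    ∃ Vlp : ℤ → ℝ, IsLimitPeriodic Vlp ∧
      (∃ C : ℝ, C < ε ∧ ∀ n : ℤ, |Vlp n| ≤ C) ∧
      HasPurePointSpectrum (fun n => V n + Vlp n) := by
  obtain ⟨M, hM⟩ := hV
  have hM0 : 0 ≤ M := (abs_nonneg _).trans (hM 0)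
  have hlog : 0 ≤ Real.log (2 * (M + 2) + 4) := Real.log_nonneg (by linarith)
  obtain ⟨x, hx⟩ := Filter.eventually_atTop.1 ((eventually_scaleBounds (M := M + 2) (by linarith)
    (Λ := 32 * (Real.log (2 * (M + 2) + 4) + 1)) (by linarith) le_rfl).and
    (tendsto_one_div_atTop_nhds_zero_nat.eventually_lt_const hε))
  obtain ⟨s, P, U, T, h0, hper, hU⟩ := exists_isPotentialTower (x := x) (V := V) (by linarith)
    (fun n => by linarith [hM n]) fun y hy => (hx y hy).1
  refine ⟨fun n => U n - V n, fun r hr => ?_, ⟨1 / x, (hx x le_rfl).2, fun n => ?_⟩, ?_⟩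
  · have hlim : Filter.Tendsto (fun k : ℕ => 1 / (x : ℝ) / 2 ^ k) Filter.atTop (nhds 0) := by
      simpa [div_eq_mul_inv] using (tendsto_pow_atTop_nhds_zero_of_lt_one
        (r := (2 : ℝ)⁻¹) (by norm_num) (by norm_num)).const_mul (1 / (x : ℝ))
    obtain ⟨k, hk⟩ := (hlim.eventually_le_const hr).exists
    exact ⟨_, hper k, fun n => by simpa using (hU k n).trans hk⟩
  · simpa [h0] using hU 0 n
  · simpa using T.hasPurePointSpectrum
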